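/- Let c ∈ [nπ/2, (n+1)π/2), let D ⊂ ℝⁿ be a bounded domain, I ⊂ ℝ an open interval, and u ∈ ℱ_c(I × D). Then for any precompact open subsets I' ⊂ I and D' ⊂ D there exists a sequence (u_k)_{k∈ℕ} of smooth functions on I' × D' with u_k ∈ ℱ_c(I' × D') for every k, such that (u_k) is strictly decreasing and converges pointwise to u on I' × D'. -/

import Mathlib

open Real Filter Matrix

noncomputable section

/-- The Hessian matrix of a function `v : ℝ^m → ℝ` at `x`. -/
def hessianMatrix {m : ℕ} (v : (Fin m → ℝ) → ℝ) (x : Fin m → ℝ) :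
    Matrix (Fin m) (Fin m) ℝ :=
  Matrix.of fun i j => iteratedFDeriv ℝ 2 v x ![Pi.single i 1, Pi.single j 1]

/-- The lifted Lagrangian angle θ̃(A) = ∑ arctan λ_j(A) of a real symmetric matrix. -/
def liftedAngle {m : ℕ} (A : Matrix (Fin m) (Fin m) ℝ) : ℝ :=
  if h : A.IsHermitian then ∑ j, Real.arctan (h.eigenvalues j) else 0

/-- The Harvey–Lawson branches `F_c` of the special Lagrangian subequation. -/
def Fc (m : ℕ) (c : ℝ) : Set (Matrix (Fin m) (Fin m) ℝ) :=
  {A | A.IsSymm ∧ c ≤ liftedAngle A}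

/-- `I_n = diag(0,1,…,1)` as a complex `(n+1)×(n+1)` matrix. -/
def Inmat (n : ℕ) : Matrix (Fin (n+1)) (Fin (n+1)) ℂ :=
  Matrix.diagonal fun i => if i = 0 then 0 else 1

/-- The complex matrix `I_n + i A`. -/
def cmat {n : ℕ} (A : Matrix (Fin (n+1)) (Fin (n+1)) ℝ) :
    Matrix (Fin (n+1)) (Fin (n+1)) ℂ :=
  Inmat n + Complex.I • A.map (fun a => (a : ℂ))

open Classical in
/-- The lifted space-time Lagrangian angle Θ̃, summing `Complex.arg` (with values in
`(-π, π]`) over the roots (with multiplicity) of the characteristic polynomial of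
`I_n + i A`, shifted by `π/2` over the singular set `S = {det (I_n + iA) = 0}` where only
the nonzero roots are counted. -/
def spaceTimeAngle {n : ℕ} (A : Matrix (Fin (n+1)) (Fin (n+1)) ℝ) : ℝ :=
  if (cmat A).det = 0 then
    π / 2 + ((((cmat A).charpoly.roots).filter (fun z => z ≠ 0)).map Complex.arg).sum
  else (((cmat A).charpoly.roots).map Complex.arg).sum

/-- The degenerate special Lagrangian subequation `ℱ_c ⊂ Sym(ℝ^{n+1})`. -/
def calF (n : ℕ) (c : ℝ) : Set (Matrix (Fin (n+1)) (Fin (n+1)) ℝ) :=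
  {A | A.IsSymm ∧ c ≤ spaceTimeAngle A}

/-- Interior of a set of symmetric matrices, relative to the symmetric matrices. -/
def symInterior {m : ℕ} (F : Set (Matrix (Fin m) (Fin m) ℝ)) :
    Set (Matrix (Fin m) (Fin m) ℝ) :=
  {A | A.IsSymm ∧ ∀ᶠ B in nhds A, B.IsSymm → B ∈ F}

/-- The dual subequation `F̃ = (−Int F)ᶜ` (within the symmetric matrices). -/
def dualSub {m : ℕ} (F : Set (Matrix (Fin m) (Fin m) ℝ)) :
    Set (Matrix (Fin m) (Fin m) ℝ) :=
  {A | A.IsSymm ∧ -A ∉ symInterior F}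

/-- An `EReal`-valued (i.e. `[−∞,∞)`-valued) function is subaffine on `U` if, for every
affine function `a` and compact `K ⊆ U`, `u ≤ a` on `∂K` implies `u ≤ a` on `K`. -/
def IsSubaffine {m : ℕ} (U : Set (Fin m → ℝ)) (u : (Fin m → ℝ) → EReal) : Prop :=
  ∀ (a : (Fin m → ℝ) →ᵃ[ℝ] ℝ) (K : Set (Fin m → ℝ)), IsCompact K → K ⊆ U →
    (∀ x ∈ frontier K, u x ≤ (a x : EReal)) → ∀ x ∈ K, u x ≤ (a x : EReal)

/-- `u` is of type `F` on `U` (i.e. `u ∈ F(U)`): `u` is `[−∞,∞)`-valued, upper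
semicontinuous on `U`, and `u + v` is subaffine on `U` for every `C²` function `v`
whose Hessian lies in the dual subequation `F̃` at every point of `U`. -/
def IsTypeF {m : ℕ} (F : Set (Matrix (Fin m) (Fin m) ℝ)) (U : Set (Fin m → ℝ))
    (u : (Fin m → ℝ) → EReal) : Prop :=
  (∀ x ∈ U, u x ≠ ⊤) ∧ UpperSemicontinuousOn u U ∧
    ∀ v : (Fin m → ℝ) → ℝ, ContDiffOn ℝ 2 v U →
      (∀ x ∈ U, hessianMatrix v x ∈ dualSub F) →
      IsSubaffine U (fun x => u x + ((v x : ℝ) : EReal))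

/-- The lower-right `n×n` block `A⁺` of an `(n+1)×(n+1)` matrix. -/
def Aplus {n : ℕ} (A : Matrix (Fin (n+1)) (Fin (n+1)) ℝ) : Matrix (Fin n) (Fin n) ℝ :=
  Matrix.of fun i j => A i.succ j.succ

end

/-!
Split off the corner entry `a` of `A = [[a, bᵀ], [b, S]]`. Sliding `b` to zero along a path that
fixes the Schur complement `S - a⁻¹ b bᵀ` keeps `det (I_n + i A)` fixed, and hence also the angle,
which is therefore `±π/2` plus the Lagrangian angle of the Schur complement. For `nπ/2 ≤ c` it
follows that `A ∈ ℱ_c` if and only if `S` exceeds some `T` with `θ̃(T) ≥ c - π/2` so much that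
`A - [[0, 0], [0, T]]` is positive semidefinite. Such `T` are positive semidefinite, where `θ̃` is
concave because `arctan` is concave on `[0, ∞)`. So `ℱ_c` is a closed convex set of positive
semidefinite matrices.

For any such subequation `F`, a function `u` of type `F` is convex along segments, hence near each
point either identically `-∞` or finite and continuous. Where it is finite, write `F` as an
intersection of half-spaces `{f ≥ t}` with `f` nonnegative on the positive semidefinite matrices.
Up to a quadratic correction, `u` lies below the solutions of `f(D²h) = 0` on small balls with the
same boundary values, which exist because the Dirichlet problem is solvable in polynomials. This
comparison is a closed convex condition, so mollifications `φ * u` inherit it, and since they are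
smooth it forces their Hessians into `F`. Mollifications within `2⁻ᵏ/8` of `u`, raised by `2⁻ᵏ`, are
then the required sequence; where `u = -∞`, quadratic polynomials minus `k` are.
-/

/-! ### Arguments of eigenvalues -/

section CharpolyRoots

variable {ι : Type*} [Fintype ι] [DecidableEq ι]

lemma exists_charpoly_roots_eq_map (T : Matrix ι ι ℂ) :
    ∃ z : Fin (Fintype.card ι) → ℂ, T.charpoly.roots = Finset.univ.val.map z := by
  have hcard : T.charpoly.roots.card = Fintype.card ι := by
    rw [← (IsAlgClosed.splits T.charpoly).natDegree_eq_card_roots, charpoly_natDegree_eq_dim]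
  obtain ⟨l, hl⟩ := Quot.exists_rep T.charpoly.roots
  change (l : Multiset ℂ) = T.charpoly.roots at hl
  rw [← hl, Multiset.coe_card] at hcard
  rw [← hl, ← hcard]
  exact ⟨l.get, by rw [Fin.univ_val_map, List.ofFn_get]⟩

lemma charpoly_roots_eq_map_iff {κ : Type*} [Fintype κ] {T : Matrix ι ι ℂ} {z : κ → ℂ} :
    T.charpoly.roots = Finset.univ.val.map z ↔
      T.charpoly = ∏ i, (Polynomial.X - Polynomial.C (z i)) := by
  have hprod : ∏ i, (Polynomial.X - Polynomial.C (z i)) =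
      ((Finset.univ.val.map z).map fun w => Polynomial.X - Polynomial.C w).prod := by
    rw [Multiset.map_map]
    rfl
  refine ⟨fun h => ?_, fun h => ?_⟩
  · rw [(IsAlgClosed.splits T.charpoly).eq_prod_roots_of_monic (charpoly_monic T), h, hprod]
  · rw [h, hprod, Polynomial.roots_multiset_prod_X_sub_C]

lemma hasEigenvalue_of_mem_charpoly_roots {T : Matrix ι ι ℂ} {z : ℂ}
    (hz : z ∈ T.charpoly.roots) : Module.End.HasEigenvalue (toLin' T) z := by
  rw [Module.End.hasEigenvalue_iff_isRoot_charpoly, charpoly_toLin']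
  exact Polynomial.isRoot_of_mem_roots hz

lemma norm_le_of_mem_charpoly_roots {T : Matrix ι ι ℂ} {z : ℂ} (hz : z ∈ T.charpoly.roots) {C : ℝ}
    (hC : ∀ i j, ‖T i j‖ ≤ C) : ‖z‖ ≤ Fintype.card ι * C := by
  obtain ⟨k, hk⟩ := eigenvalue_mem_ball (hasEigenvalue_of_mem_charpoly_roots hz)
  rw [mem_closedBall_iff_norm] at hk
  calc ‖z‖ ≤ ‖T k k‖ + ‖z - T k k‖ := norm_le_norm_add_norm_sub' z (T k k)
    _ ≤ ‖T k k‖ + ∑ j ∈ Finset.univ.erase k, ‖T k j‖ := by gcongr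
    _ = ∑ j, ‖T k j‖ := Finset.add_sum_erase _ (fun j => ‖T k j‖) (Finset.mem_univ k)
    _ ≤ Fintype.card ι * C := by
      simpa using Finset.sum_le_card_nsmul Finset.univ _ C fun j _ => hC k j

lemma exists_subseq_tendsto_charpoly_roots {T : ℕ → Matrix ι ι ℂ} {T₀ : Matrix ι ι ℂ}
    (hT : Tendsto T atTop (nhds T₀)) {κ : Type*} [Fintype κ] {z : ℕ → κ → ℂ}
    (hz : ∀ k, (T k).charpoly.roots = Finset.univ.val.map (z k)) :
    ∃ z₀ : κ → ℂ, T₀.charpoly.roots = Finset.univ.val.map z₀ ∧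
      ∃ φ : ℕ → ℕ, StrictMono φ ∧ Tendsto (z ∘ φ) atTop (nhds z₀) := by
  obtain ⟨C, hC⟩ : ∃ C, ∀ k i j, ‖T k i j‖ ≤ C := by
    obtain ⟨C, hC⟩ := isBounded_iff_forall_norm_le.1
      (Metric.isBounded_range_of_tendsto (fun k i j => T k i j) hT)
    exact ⟨C, fun k i j => (norm_le_pi_norm (T k i) j).trans
      ((norm_le_pi_norm (T k) i).trans (hC _ ⟨k, rfl⟩))⟩
  have hbdd : ∀ k, z k ∈ Metric.closedBall (0 : κ → ℂ) |Fintype.card ι * C| := fun k => by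
    rw [mem_closedBall_zero_iff]
    refine (pi_norm_le_iff_of_nonneg (abs_nonneg _)).2 fun i => le_abs.2 (Or.inl ?_)
    exact norm_le_of_mem_charpoly_roots (by simp [hz k]) (hC k)
  obtain ⟨z₀, -, φ, hφ, hlim⟩ := (isCompact_closedBall _ _).tendsto_subseq hbdd
  refine ⟨z₀, charpoly_roots_eq_map_iff.2 (Polynomial.funext fun w => ?_), φ, hφ, hlim⟩
  have hdet : Tendsto (fun k => (T (φ k)).charpoly.eval w) atTop (nhds (T₀.charpoly.eval w)) := by
    have hcont : Continuous fun M : Matrix ι ι ℂ => (scalar ι w - M).det := by fun_prop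
    simp only [eval_charpoly]
    exact (hcont.tendsto T₀).comp (hT.comp hφ.tendsto_atTop)
  refine tendsto_nhds_unique hdet ?_
  simp only [charpoly_roots_eq_map_iff.1 (hz _), Polynomial.eval_prod, Polynomial.eval_sub,
    Polynomial.eval_X, Polynomial.eval_C]
  exact tendsto_finsetProd _ fun i _ => tendsto_const_nhds.sub (tendsto_pi_nhds.1 hlim i)

/-- The sum of the arguments of the eigenvalues of a complex matrix, with multiplicity. -/
noncomputable def argSum (T : Matrix ι ι ℂ) : ℝ :=
  (T.charpoly.roots.map Complex.arg).sum

lemma argSum_eq_sum {κ : Type*} [Fintype κ] {T : Matrix ι ι ℂ} {z : κ → ℂ}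
    (h : T.charpoly.roots = Finset.univ.val.map z) : argSum T = ∑ i, Complex.arg (z i) := by
  rw [argSum, h, Multiset.map_map]
  rfl

lemma continuousAt_argSum {T : Matrix ι ι ℂ}
    (hT : ∀ z ∈ T.charpoly.roots, z ∈ Complex.slitPlane) : ContinuousAt argSum T := by
  have : (nhds T).IsCountablyGenerated :=
    FirstCountableTopology.nhds_generated_countable (t := Pi.topologicalSpace) (T : ι → ι → ℂ)
  refine tendsto_of_seq_tendsto fun x hx => tendsto_of_subseq_tendsto fun ns hns => ?_
  choose z hz using fun k => exists_charpoly_roots_eq_map (x (ns k))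
  obtain ⟨z₀, hz₀, φ, -, hlim⟩ := exists_subseq_tendsto_charpoly_roots (hx.comp hns) hz
  refine ⟨φ, ?_⟩
  rw [argSum_eq_sum hz₀]
  refine Tendsto.congr (fun k => (argSum_eq_sum (hz (φ k))).symm) ?_
  refine tendsto_finsetSum _ fun i _ => ?_
  exact (Complex.continuousAt_arg (hT _ (by simp [hz₀]))).tendsto.comp (tendsto_pi_nhds.1 hlim i)

lemma exp_argSum_mul_I {T : Matrix ι ι ℂ} (hT : T.det ≠ 0) :
    Complex.exp (argSum T * Complex.I) = T.det / ‖T.det‖ := by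
  obtain ⟨z, hz⟩ := exists_charpoly_roots_eq_map T
  have hdet : T.det = ∏ i, z i := by
    rw [det_eq_prod_roots_charpoly, hz]
    rfl
  rw [hdet] at hT
  rw [argSum_eq_sum hz, hdet, norm_prod]
  push_cast
  rw [Finset.sum_mul, Complex.exp_sum, ← Finset.prod_div_distrib]
  refine Finset.prod_congr rfl fun i _ => ?_
  have hzi : z i ≠ 0 := Finset.prod_ne_zero_iff.1 hT i (Finset.mem_univ i)
  rw [eq_div_iff (by simpa using hzi), mul_comm]
  exact Complex.norm_mul_exp_arg_mul_I (z i)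

/-- Along a path of invertible matrices with constant determinant the sum of the arguments can only
change by multiples of `2 * π`, so continuity keeps it constant. -/
lemma argSum_eq_of_det_eq {X : Type*} [TopologicalSpace X] [PreconnectedSpace X]
    {T : X → Matrix ι ι ℂ} (hcont : Continuous T)
    (hslit : ∀ x, ∀ z ∈ (T x).charpoly.roots, z ∈ Complex.slitPlane)
    (hdet : ∀ x y, (T x).det = (T y).det) (hne : ∀ x, (T x).det ≠ 0) (x y : X) :
    argSum (T x) = argSum (T y) := by
  have hsum : Continuous fun x => argSum (T x) := continuous_iff_continuousAt.2 fun x =>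
    (continuousAt_argSum (hslit x)).comp hcont.continuousAt
  refine Circle.isCoveringMap_exp.const_of_comp hsum (fun x y => Circle.ext ?_) x y
  rw [Circle.coe_exp, Circle.coe_exp, exp_argSum_mul_I (hne x), exp_argSum_mul_I (hne y), hdet x y]

end CharpolyRoots

section SpaceTimeMatrix

variable {n : ℕ} {A : Matrix (Fin (n + 1)) (Fin (n + 1)) ℝ}

lemma re_star_dotProduct_cmat_mulVec (hA : A.IsSymm) (v : Fin (n + 1) → ℂ) :
    (star v ⬝ᵥ (cmat A *ᵥ v)).re = ∑ i : Fin n, Complex.normSq (v i.succ) := by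
  have hherm : (A.map fun a => (a : ℂ)).IsHermitian :=
    (isHermitian_iff_isSymm.2 hA).map _ fun a => (Complex.conj_ofReal a).symm
  have him : (star v ⬝ᵥ (A.map fun a => (a : ℂ)) *ᵥ v).im = 0 :=
    hherm.im_star_dotProduct_mulVec_self v
  have hdiag : star v ⬝ᵥ (Inmat n *ᵥ v) = ∑ i : Fin n, star (v i.succ) * v i.succ := by
    simp [dotProduct, Inmat, mulVec_diagonal, Fin.sum_univ_succ]
  rw [cmat, add_mulVec, dotProduct_add, smul_mulVec, dotProduct_smul, smul_eq_mul, hdiag,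
    Complex.add_re, Complex.I_mul_re, him, neg_zero, add_zero, Complex.re_sum]
  exact Finset.sum_congr rfl fun i _ => by simp [Complex.normSq_apply]

lemma re_nonneg_of_mem_roots_cmat (hA : A.IsSymm) {z : ℂ} (hz : z ∈ (cmat A).charpoly.roots) :
    0 ≤ z.re := by
  obtain ⟨v, hv, hv0⟩ := (hasEigenvalue_of_mem_charpoly_roots hz).exists_hasEigenvector
  rw [Module.End.mem_eigenspace_iff, toLin'_apply] at hv
  have hre := re_star_dotProduct_cmat_mulVec hA v
  have hnorm : star v ⬝ᵥ v = ((∑ i, Complex.normSq (v i) : ℝ) : ℂ) := by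
    simp [dotProduct, Complex.normSq_eq_conj_mul_self]
  rw [hv, dotProduct_smul, smul_eq_mul, hnorm, Complex.re_mul_ofReal] at hre
  obtain ⟨i, hi⟩ := Function.ne_iff.1 hv0
  have hpos : 0 < ∑ i, Complex.normSq (v i) :=
    Finset.sum_pos' (fun _ _ => Complex.normSq_nonneg _)
      ⟨i, Finset.mem_univ _, Complex.normSq_pos.2 hi⟩
  refine nonneg_of_mul_nonneg_left ?_ hpos
  rw [hre]
  exact Finset.sum_nonneg fun _ _ => Complex.normSq_nonneg _

lemma col_zero_eq_zero_of_det_cmat_eq_zero (hA : A.IsSymm) (h : (cmat A).det = 0) (i) :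
    A i 0 = 0 := by
  obtain ⟨v, hv, hker⟩ := exists_mulVec_eq_zero_iff.2 h
  have hre := re_star_dotProduct_cmat_mulVec hA v
  rw [hker, dotProduct_zero, Complex.zero_re, eq_comm,
    Finset.sum_eq_zero_iff_of_nonneg fun _ _ => Complex.normSq_nonneg _] at hre
  have hsucc : ∀ i : Fin n, v i.succ = 0 := fun i =>
    Complex.normSq_eq_zero.1 (hre i (Finset.mem_univ i))
  have hzero : v 0 ≠ 0 := fun h0 => hv (funext (Fin.cases h0 hsucc))
  have hrow := congrFun hker i
  simp only [mulVec, dotProduct, Fin.sum_univ_succ, hsucc, mul_zero, Finset.sum_const_zero,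
    add_zero, Pi.zero_apply, mul_eq_zero, hzero, or_false] at hrow
  have hdiag : Inmat n i 0 = 0 := by
    rw [Inmat, diagonal_apply]
    split_ifs <;> simp_all
  simpa [cmat, hdiag] using hrow

lemma mem_slitPlane_of_mem_roots_cmat (hA : A.IsSymm) (h : (cmat A).det ≠ 0) {z : ℂ}
    (hz : z ∈ (cmat A).charpoly.roots) : z ∈ Complex.slitPlane := by
  have hz0 : z ≠ 0 := by
    rintro rfl
    exact h (by rw [det_eq_prod_roots_charpoly]; exact Multiset.prod_eq_zero hz)
  rcases (re_nonneg_of_mem_roots_cmat hA hz).lt_or_eq with hre | hre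
  · exact Or.inl hre
  · exact Or.inr fun him => hz0 (Complex.ext hre.symm him)

lemma spaceTimeAngle_eq_argSum (h : (cmat A).det ≠ 0) : spaceTimeAngle A = argSum (cmat A) := by
  rw [spaceTimeAngle, if_neg h, argSum]

lemma continuous_cmat : Continuous (cmat (n := n)) := by
  unfold cmat
  refine continuous_matrix fun i j => ?_
  simp only [Matrix.add_apply, Matrix.smul_apply, Matrix.map_apply, smul_eq_mul]
  have : Continuous fun A : Matrix (Fin (n + 1)) (Fin (n + 1)) ℝ => A i j := by fun_prop
  fun_prop

end SpaceTimeMatrix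

/-! ### Bordered matrices and Schur complements -/

/-- The `(n + 1) × (n + 1)` matrix with corner entry `a`, first row `(a, b)`, first column `(a, b')`
and lower-right block `S`. -/
def bordered {R : Type*} {n : ℕ} (a : R) (b b' : Fin n → R) (S : Matrix (Fin n) (Fin n) R) :
    Matrix (Fin (n + 1)) (Fin (n + 1)) R :=
  Matrix.of (Fin.cons (Fin.cons a b) fun i => Fin.cons (b' i) (S i))

section Bordered

variable {R : Type*} {n : ℕ} (a : R) (b b' : Fin n → R) (S : Matrix (Fin n) (Fin n) R)

@[simp] lemma bordered_zero_zero : bordered a b b' S 0 0 = a := rfl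

@[simp] lemma bordered_zero_succ (j : Fin n) : bordered a b b' S 0 j.succ = b j := rfl

@[simp] lemma bordered_succ_zero (i : Fin n) : bordered a b b' S i.succ 0 = b' i := rfl

@[simp] lemma bordered_succ_succ (i j : Fin n) : bordered a b b' S i.succ j.succ = S i j := rfl

variable {S}

lemma ext_of_zero_succ {A B : Matrix (Fin (n + 1)) (Fin (n + 1)) R} (h₀₀ : A 0 0 = B 0 0)
    (h₀ : ∀ j : Fin n, A 0 j.succ = B 0 j.succ) (h : ∀ i : Fin n, A i.succ 0 = B i.succ 0)
    (h' : ∀ i j : Fin n, A i.succ j.succ = B i.succ j.succ) : A = B := by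
  ext i j
  refine Fin.cases (Fin.cases h₀₀ h₀ j) (fun i => Fin.cases (h i) (h' i) j) i

lemma isSymm_bordered (hS : S.IsSymm) : (bordered a b b S).IsSymm := by
  apply ext_of_zero_succ <;> intros <;> simp [transpose_apply, hS.apply]

variable (S)

lemma det_bordered_zero [CommRing R] : (bordered a 0 b' S).det = a * S.det := by
  rw [det_succ_row_zero, Fin.sum_univ_succ]
  simp
  congr 1

lemma charpoly_bordered_zero_zero [CommRing R] :
    (bordered a 0 0 S).charpoly = (Polynomial.X - Polynomial.C a) * S.charpoly := by
  rw [charpoly, charpoly, ← det_bordered_zero (b' := 0)]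
  congr 1
  apply ext_of_zero_succ <;> intros <;>
    simp [charmatrix_apply, diagonal_apply, (Fin.succ_ne_zero _).symm]

/-- The matrix of the shear of the first coordinate by `b`. -/
def shear [Zero R] [One R] (b : Fin n → R) : Matrix (Fin (n + 1)) (Fin (n + 1)) R :=
  bordered 1 0 b 1

lemma det_shear [CommRing R] : (shear b).det = 1 := by
  rw [shear, det_bordered_zero, det_one, mul_one]

lemma bordered_eq_shear_mul [Field R] {a : R} (ha : a ≠ 0) :
    bordered a b b (S + a⁻¹ • vecMulVec b b) =
      shear (a⁻¹ • b) * bordered a 0 0 S * (shear (a⁻¹ • b))ᵀ := by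
  apply ext_of_zero_succ <;> intros <;>
    simp [shear, mul_apply, Fin.sum_univ_succ, one_apply, vecMulVec_apply, ha] <;> field

lemma continuous_bordered {X : Type*} [TopologicalSpace X] [TopologicalSpace R] {a : X → R}
    {b b' : X → Fin n → R} {S : X → Matrix (Fin n) (Fin n) R} (ha : Continuous a)
    (hb : Continuous b) (hb' : Continuous b') (hS : Continuous S) :
    Continuous fun x => bordered (a x) (b x) (b' x) (S x) := continuous_matrix fun i j =>
  Fin.cases (Fin.cases ha ((continuous_pi_iff.1 hb ·)) j) (fun i =>
    Fin.cases (continuous_pi_iff.1 hb' i) (hS.matrix_elem i ·) j) i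

end Bordered

section LagrangianAngle

variable {n : ℕ} {S : Matrix (Fin n) (Fin n) ℝ}

/-- The complex matrix `1 + i S`, the sum of whose eigenvalue arguments is the Lagrangian angle of
`S`. -/
def onePlusI (S : Matrix (Fin n) (Fin n) ℝ) : Matrix (Fin n) (Fin n) ℂ :=
  1 + Complex.I • S.map fun a => (a : ℂ)

lemma arg_one_add_I_mul (x : ℝ) : Complex.arg (1 + Complex.I * x) = arctan x := by
  have hnorm : ‖(1 + Complex.I * x : ℂ)‖ = √(1 + x ^ 2) := by
    rw [mul_comm, ← Complex.ofReal_one, Complex.norm_add_mul_I, one_pow]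
  rw [Complex.arg_of_re_nonneg (by simp), arctan_eq_arcsin, hnorm]
  simp

lemma charpoly_onePlusI (hS : S.IsHermitian) :
    (onePlusI S).charpoly =
      ∏ j, (Polynomial.X - Polynomial.C (1 + Complex.I * (hS.eigenvalues j : ℂ))) := by
  have hmap : (S.map fun a => (a : ℂ)).charpoly =
      ∏ j, (Polynomial.X - Polynomial.C ((hS.eigenvalues j : ℝ) : ℂ)) := by
    have h := charpoly_map S (algebraMap ℝ ℂ)
    rw [hS.charpoly_eq, Polynomial.map_prod] at h
    simpa using h
  refine Polynomial.funext fun w => ?_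
  have hscale : scalar (Fin n) w - onePlusI S =
      Complex.I • (scalar (Fin n) ((w - 1) / Complex.I) - S.map fun a => (a : ℂ)) := by
    have hdiv : Complex.I * ((w - 1) / Complex.I) = w - 1 := mul_div_cancel₀ _ Complex.I_ne_zero
    ext i j
    rcases eq_or_ne i j with rfl | hij
    · simp only [onePlusI, Matrix.sub_apply, Matrix.add_apply, Matrix.smul_apply, scalar_apply,
        diagonal_apply_eq, one_apply_eq, smul_eq_mul, mul_sub, hdiv]
      ring
    · simp [onePlusI, hij]
  have heval := congrArg (Polynomial.eval ((w - 1) / Complex.I)) hmap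
  rw [eval_charpoly, Polynomial.eval_prod] at heval
  rw [eval_charpoly, Polynomial.eval_prod, hscale, det_smul, heval, ← Finset.card_univ,
    ← Finset.prod_const, ← Finset.prod_mul_distrib]
  refine Finset.prod_congr rfl fun j _ => ?_
  simp only [Polynomial.eval_sub, Polynomial.eval_X, Polynomial.eval_C]
  field

lemma argSum_onePlusI (hS : S.IsSymm) : argSum (onePlusI S) = liftedAngle S := by
  have hS' := isHermitian_iff_isSymm.2 hS
  rw [argSum_eq_sum (charpoly_roots_eq_map_iff.2 (charpoly_onePlusI hS')), liftedAngle,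
    dif_pos hS']
  simp only [arg_one_add_I_mul]

lemma ne_zero_of_mem_roots_onePlusI (hS : S.IsSymm) {z : ℂ}
    (hz : z ∈ (onePlusI S).charpoly.roots) : z ≠ 0 := by
  rw [charpoly_roots_eq_map_iff.2 (charpoly_onePlusI (isHermitian_iff_isSymm.2 hS)),
    Multiset.mem_map] at hz
  obtain ⟨i, -, rfl⟩ := hz
  intro h
  simpa using congrArg Complex.re h

end LagrangianAngle

section SpaceTimeAngleBordered

variable {n : ℕ} {S : Matrix (Fin n) (Fin n) ℝ}

lemma cmat_bordered (a : ℝ) (b : Fin n → ℝ) (S : Matrix (Fin n) (Fin n) ℝ) :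
    cmat (bordered a b b S) = bordered (Complex.I * a) (fun i => Complex.I * b i)
      (fun i => Complex.I * b i) (onePlusI S) := by
  apply ext_of_zero_succ <;> intros <;>
    simp [cmat, onePlusI, Inmat, diagonal_apply, one_apply, (Fin.succ_ne_zero _).symm]

lemma roots_cmat_bordered_zero (a : ℝ) (S : Matrix (Fin n) (Fin n) ℝ) :
    (cmat (bordered a 0 0 S)).charpoly.roots =
      {Complex.I * (a : ℂ)} + (onePlusI S).charpoly.roots := by
  have hcmat : cmat (bordered a 0 0 S) = bordered (Complex.I * a) 0 0 (onePlusI S) := by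
    simpa using! cmat_bordered a 0 S
  rw [hcmat, charpoly_bordered_zero_zero, Polynomial.roots_mul, Polynomial.roots_X_sub_C]
  exact mul_ne_zero (Polynomial.X_sub_C_ne_zero _) (charpoly_monic _).ne_zero

lemma spaceTimeAngle_bordered_zero (hS : S.IsSymm) :
    spaceTimeAngle (bordered 0 0 0 S) = π / 2 + liftedAngle S := by
  have hroots := roots_cmat_bordered_zero 0 S
  have hdet : (cmat (bordered 0 0 0 S)).det = 0 := by
    rw [det_eq_prod_roots_charpoly, hroots]
    simp
  rw [spaceTimeAngle, if_pos hdet, hroots, ← argSum_onePlusI hS, argSum, Multiset.filter_add,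
    Multiset.filter_eq_nil.2 (by simp), zero_add,
    Multiset.filter_eq_self.2 fun z hz => ne_zero_of_mem_roots_onePlusI hS hz]

lemma det_cmat_bordered_ne_zero {a : ℝ} (ha : a ≠ 0) (b : Fin n → ℝ) (hS : S.IsSymm) :
    (cmat (bordered a b b S)).det ≠ 0 := fun h =>
  ha (col_zero_eq_zero_of_det_cmat_eq_zero (isSymm_bordered a b hS) h 0)

lemma isSymm_add_smul_vecMulVec (t : ℝ) (b : Fin n → ℝ) (hS : S.IsSymm) :
    (S + t • vecMulVec b b).IsSymm :=
  hS.add (IsSymm.smul (by rw [IsSymm, transpose_vecMulVec]) t)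

lemma det_cmat_bordered {a : ℝ} (ha : a ≠ 0) (b : Fin n → ℝ) (S : Matrix (Fin n) (Fin n) ℝ) :
    (cmat (bordered a b b (S + a⁻¹ • vecMulVec b b))).det = Complex.I * a * (onePlusI S).det := by
  have hblock : onePlusI (S + a⁻¹ • vecMulVec b b) = onePlusI S +
      (Complex.I * a : ℂ)⁻¹ • vecMulVec (fun i => Complex.I * b i) (fun i => Complex.I * b i) := by
    ext i j
    simp only [onePlusI, Matrix.add_apply, Matrix.smul_apply, Matrix.map_apply, vecMulVec_apply,
      smul_eq_mul, Complex.ofReal_add, Complex.ofReal_mul, Complex.ofReal_inv]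
    field
  have hIa : Complex.I * a ≠ 0 := mul_ne_zero Complex.I_ne_zero (Complex.ofReal_ne_zero.2 ha)
  rw [cmat_bordered, hblock, bordered_eq_shear_mul _ _ hIa, det_mul, det_mul, det_transpose,
    det_shear, det_bordered_zero, one_mul, mul_one]

/-- Sliding `b` to zero while keeping the Schur complement `S` fixed does not change the angle. -/
lemma spaceTimeAngle_bordered {a : ℝ} (ha : a ≠ 0) (b : Fin n → ℝ) (hS : S.IsSymm) :
    spaceTimeAngle (bordered a b b (S + a⁻¹ • vecMulVec b b)) =
      Complex.arg (Complex.I * a) + liftedAngle S := by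
  set M : ℝ → Matrix (Fin (n + 1)) (Fin (n + 1)) ℝ := fun r =>
    bordered a (r • b) (r • b) (S + a⁻¹ • vecMulVec (r • b) (r • b)) with hM
  have hsymm : ∀ r : ℝ, (S + a⁻¹ • vecMulVec (r • b) (r • b)).IsSymm := fun r =>
    isSymm_add_smul_vecMulVec _ _ hS
  have hdet : ∀ r, (cmat (M r)).det ≠ 0 := fun r => det_cmat_bordered_ne_zero ha _ (hsymm r)
  have hcont : Continuous M := by
    have hb : Continuous fun r : ℝ => r • b := by fun_prop
    refine continuous_bordered continuous_const hb hb (continuous_const.add ?_)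
    exact (hb.matrix_vecMulVec hb).const_smul a⁻¹
  have hslide := argSum_eq_of_det_eq (continuous_cmat.comp hcont)
    (fun r _ hz => mem_slitPlane_of_mem_roots_cmat (isSymm_bordered _ _ (hsymm r)) (hdet r) hz)
    (fun r r' => by simp only [hM, Function.comp_apply, det_cmat_bordered ha]) hdet 1 0
  have h₁ : M 1 = bordered a b b (S + a⁻¹ • vecMulVec b b) := by simp [hM]
  have h₀ : M 0 = bordered a 0 0 S := by simp [hM]
  rw [← h₁, spaceTimeAngle_eq_argSum (hdet 1)]
  refine hslide.trans ?_
  rw [Function.comp_apply, h₀, argSum, roots_cmat_bordered_zero, Multiset.map_add,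
    Multiset.sum_add, Multiset.map_singleton, Multiset.sum_singleton, ← argSum_onePlusI hS, argSum]

end SpaceTimeAngleBordered

/-! ### The Lagrangian angle of positive semidefinite matrices -/

section PosSemidef

variable {ι : Type*}

lemma posSemidef_iff_isSymm_and [Fintype ι] {A : Matrix ι ι ℝ} :
    A.PosSemidef ↔ A.IsSymm ∧ ∀ x, 0 ≤ x ⬝ᵥ A *ᵥ x := by
  simp only [posSemidef_iff_dotProduct_mulVec, isHermitian_iff_isSymm, star_trivial]

lemma isSymm_of_posSemidef {A : Matrix ι ι ℝ} (hA : A.PosSemidef) : A.IsSymm :=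
  isHermitian_iff_isSymm.1 hA.isHermitian

lemma isClosed_setOf_isSymm {R : Type*} [TopologicalSpace R] [T2Space R] :
    IsClosed {A : Matrix ι ι R | A.IsSymm} :=
  isClosed_eq continuous_id.matrix_transpose continuous_id

lemma isClosed_setOf_posSemidef [Finite ι] : IsClosed {A : Matrix ι ι ℝ | A.PosSemidef} := by
  have := Fintype.ofFinite ι
  simp only [posSemidef_iff_isSymm_and, Set.ofPred_and, Set.ofPred_forall]
  exact isClosed_setOf_isSymm.inter (isClosed_iInter fun x => isClosed_le continuous_const
    (continuous_const.dotProduct (continuous_id.matrix_mulVec continuous_const)))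

lemma convex_setOf_posSemidef : Convex ℝ {A : Matrix ι ι ℝ | A.PosSemidef} :=
  fun _ hA _ hB _ _ hs ht _ => (hA.smul hs).add (hB.smul ht)

end PosSemidef

section LiftedAngle

variable {n : ℕ} {S : Matrix (Fin n) (Fin n) ℝ}

lemma concaveOn_arctan : ConcaveOn ℝ (Set.Ici 0) arctan := by
  refine AntitoneOn.concaveOn_of_deriv (convex_Ici 0) continuous_arctan.continuousOn
    differentiable_arctan.differentiableOn ?_
  intro x hx y _ hxy
  rw [interior_Ici, Set.mem_Ioi] at hx
  simp only [Real.deriv_arctan]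
  gcongr

lemma sum_normSq_row (P : unitaryGroup (Fin n) ℝ) (i : Fin n) : ∑ j, P.1 i j ^ 2 = 1 := by
  have h := congrFun (congrFun (Unitary.coe_mul_star_self P) i) i
  simpa [mul_apply, sq] using h

lemma sum_normSq_col (P : unitaryGroup (Fin n) ℝ) (j : Fin n) : ∑ i, P.1 i j ^ 2 = 1 := by
  have h := congrFun (congrFun (Unitary.coe_star_mul_self P) j) j
  simpa [mul_apply, sq] using h

/-- The squared entries of an orthogonal matrix are doubly stochastic, so the concavity of `arctan`
on `[0, ∞)` gives Schur's inequality between eigenvalues and diagonal entries. -/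
lemma liftedAngle_le_sum_arctan_diag (hS : S.PosSemidef) (O : unitaryGroup (Fin n) ℝ) :
    liftedAngle S ≤ ∑ i, arctan ((star O.1 * S * O.1) i i) := by
  set d := hS.isHermitian.eigenvalues
  set P : unitaryGroup (Fin n) ℝ := star O * hS.isHermitian.eigenvectorUnitary with hP
  have hdiag : star O.1 * S * O.1 = P.1 * diagonal d * star P.1 := by
    conv_lhs => rw [hS.isHermitian.spectral_theorem, Unitary.conjStarAlgAut_apply]
    simp only [hP, Submonoid.coe_mul, Unitary.coe_star, star_mul, star_star, mul_assoc]
    rfl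
  have hentry : ∀ i, (star O.1 * S * O.1) i i = ∑ j, P.1 i j ^ 2 • d j := fun i => by
    rw [hdiag, mul_apply]
    refine Finset.sum_congr rfl fun j _ => ?_
    rw [mul_diagonal, star_apply, star_trivial, smul_eq_mul]
    ring
  calc liftedAngle S = ∑ j, ∑ i, P.1 i j ^ 2 • arctan (d j) := by
        rw [liftedAngle, dif_pos hS.isHermitian]
        exact Finset.sum_congr rfl fun j _ => by rw [← Finset.sum_smul, sum_normSq_col, one_smul]
    _ = ∑ i, ∑ j, P.1 i j ^ 2 • arctan (d j) := Finset.sum_comm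
    _ ≤ ∑ i, arctan ((star O.1 * S * O.1) i i) := Finset.sum_le_sum fun i _ => by
        rw [hentry]
        exact concaveOn_arctan.le_map_sum (fun j _ => sq_nonneg _) (sum_normSq_row P i)
          fun j _ => hS.eigenvalues_nonneg j

lemma liftedAngle_eq_sum_arctan_diag (hS : S.IsHermitian) :
    liftedAngle S =
      ∑ i, arctan ((star hS.eigenvectorUnitary.1 * S * hS.eigenvectorUnitary.1) i i) := by
  have h := hS.conjStarAlgAut_star_eigenvectorUnitary
  rw [Unitary.conjStarAlgAut_star_apply] at h
  rw [h, liftedAngle, dif_pos hS]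
  simp

lemma le_liftedAngle_iff (hS : S.PosSemidef) {c : ℝ} :
    c ≤ liftedAngle S ↔
      ∀ O : unitaryGroup (Fin n) ℝ, c ≤ ∑ i, arctan ((star O.1 * S * O.1) i i) :=
  ⟨fun h O => h.trans (liftedAngle_le_sum_arctan_diag hS O), fun h =>
    (h _).trans_eq (liftedAngle_eq_sum_arctan_diag hS.isHermitian).symm⟩

lemma liftedAngle_le_arctan_eigenvalue_add (hS : S.IsHermitian) (k : Fin n) :
    liftedAngle S ≤ arctan (hS.eigenvalues k) + (n - 1) * (π / 2) := by
  rw [liftedAngle, dif_pos hS, ← Finset.add_sum_erase _ _ (Finset.mem_univ k)]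
  gcongr
  calc ∑ j ∈ Finset.univ.erase k, arctan (hS.eigenvalues j)
      ≤ ∑ _j ∈ Finset.univ.erase k, π / 2 :=
        Finset.sum_le_sum fun j _ => (arctan_lt_pi_div_two _).le
    _ = (n - 1) * (π / 2) := by
        rw [Finset.sum_const, Finset.card_erase_of_mem (Finset.mem_univ k), Finset.card_fin,
          nsmul_eq_mul, Nat.cast_pred (Fin.pos k)]

lemma liftedAngle_le (S : Matrix (Fin n) (Fin n) ℝ) : liftedAngle S ≤ n * (π / 2) := by
  unfold liftedAngle
  split_ifs with hS
  · simpa using Finset.sum_le_sum fun j (_ : j ∈ Finset.univ) =>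
      (arctan_lt_pi_div_two (hS.eigenvalues j)).le
  · positivity

lemma liftedAngle_smul_one (t : ℝ) :
    liftedAngle (t • (1 : Matrix (Fin n) (Fin n) ℝ)) = n * arctan t := by
  have hS : (t • (1 : Matrix (Fin n) (Fin n) ℝ)).IsHermitian :=
    isHermitian_iff_isSymm.2 (isSymm_one.smul t)
  have hunit := Unitary.coe_star_mul_self hS.eigenvectorUnitary
  rw [liftedAngle_eq_sum_arctan_diag hS]
  simp [hunit]

variable {c : ℝ}

lemma posSemidef_of_mem_Fc (hc : (n - 1) * (π / 2) ≤ c) (hS : S ∈ Fc n c) : S.PosSemidef := by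
  have hS' := isHermitian_iff_isSymm.2 hS.1
  refine hS'.posSemidef_iff_eigenvalues_nonneg.2 fun k => arctan_nonneg.1 ?_
  linarith [liftedAngle_le_arctan_eigenvalue_add hS' k, hS.2]

lemma mem_Fc_iff (hc : (n - 1) * (π / 2) ≤ c) :
    S ∈ Fc n c ↔ S.PosSemidef ∧
      ∀ O : unitaryGroup (Fin n) ℝ, c ≤ ∑ i, arctan ((star O.1 * S * O.1) i i) := by
  constructor
  · intro hS
    have hpos := posSemidef_of_mem_Fc hc hS
    exact ⟨hpos, (le_liftedAngle_iff hpos).1 hS.2⟩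
  · rintro ⟨hpos, h⟩
    exact ⟨isSymm_of_posSemidef hpos, (le_liftedAngle_iff hpos).2 h⟩

lemma isClosed_Fc (hc : (n - 1) * (π / 2) ≤ c) : IsClosed (Fc n c) := by
  have hFc : Fc n c = {S | S.PosSemidef} ∩ ⋂ O : unitaryGroup (Fin n) ℝ,
      {S | c ≤ ∑ i, arctan ((star O.1 * S * O.1) i i)} := by
    ext S
    simp [mem_Fc_iff hc]
  rw [hFc]
  refine isClosed_setOf_posSemidef.inter (isClosed_iInter fun O =>
    isClosed_le continuous_const (continuous_finsetSum _ fun i _ =>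
      continuous_arctan.comp (Continuous.matrix_elem ?_ i i)))
  fun_prop

lemma convex_Fc (hc : (n - 1) * (π / 2) ≤ c) : Convex ℝ (Fc n c) := by
  intro S hS T hT s t hs ht hst
  rw [mem_Fc_iff hc] at hS hT ⊢
  refine ⟨convex_setOf_posSemidef hS.1 hT.1 hs ht hst, fun O => ?_⟩
  have hnonneg : ∀ {M : Matrix (Fin n) (Fin n) ℝ}, M.PosSemidef → ∀ i,
      (star O.1 * M * O.1) i i ∈ Set.Ici (0 : ℝ) := fun hM i =>
    (hM.conjTranspose_mul_mul_same O.1).diag_nonneg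
  calc c = s * c + t * c := by rw [← add_mul, hst, one_mul]
    _ ≤ s * ∑ i, arctan ((star O.1 * S * O.1) i i) +
          t * ∑ i, arctan ((star O.1 * T * O.1) i i) := by
        gcongr
        · exact hS.2 O
        · exact hT.2 O
    _ ≤ ∑ i, arctan ((star O.1 * (s • S + t • T) * O.1) i i) := by
        rw [Finset.mul_sum, Finset.mul_sum, ← Finset.sum_add_distrib]
        refine Finset.sum_le_sum fun i _ => ?_
        simpa [mul_add, add_mul] using
          concaveOn_arctan.2 (hnonneg hS.1 i) (hnonneg hT.1 i) hs ht hst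

lemma add_posSemidef_mem_Fc (hc : (n - 1) * (π / 2) ≤ c) (hS : S ∈ Fc n c)
    {P : Matrix (Fin n) (Fin n) ℝ} (hP : P.PosSemidef) : S + P ∈ Fc n c := by
  rw [mem_Fc_iff hc] at hS ⊢
  refine ⟨hS.1.add hP, fun O => (hS.2 O).trans (Finset.sum_le_sum fun i _ => arctan_mono ?_)⟩
  rw [mul_add, add_mul, Matrix.add_apply]
  exact le_add_of_nonneg_right (hP.conjTranspose_mul_mul_same O.1).diag_nonneg

lemma exists_smul_one_mem_Fc (hc : c < n * (π / 2)) : ∃ K : ℝ, K • 1 ∈ Fc n c := by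
  have hlim : Tendsto (fun K : ℝ => (n : ℝ) * arctan K) atTop (nhds (n * (π / 2))) :=
    (tendsto_nhds_of_tendsto_nhdsWithin tendsto_arctan_atTop).const_mul _
  obtain ⟨K, hK⟩ := (hlim.eventually (lt_mem_nhds hc)).exists
  exact ⟨K, isSymm_one.smul K, by rw [liftedAngle_smul_one]; exact hK.le⟩

end LiftedAngle

/-! ### The subequation `calF n c` for `n * (π / 2) ≤ c` -/

section SchurComplement

variable {n : ℕ} {a : ℝ} {b : Fin n → ℝ} {S : Matrix (Fin n) (Fin n) ℝ}

lemma exists_eq_bordered {A : Matrix (Fin (n + 1)) (Fin (n + 1)) ℝ} (hA : A.IsSymm) :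
    ∃ (a : ℝ) (b : Fin n → ℝ) (S : Matrix (Fin n) (Fin n) ℝ),
      S.IsSymm ∧ A = bordered a b b S :=
  ⟨A 0 0, fun j => A 0 j.succ, Aplus A, IsSymm.ext fun _ _ => hA.apply _ _,
    ext_of_zero_succ rfl (fun _ => rfl) (fun _ => hA.apply _ _) fun _ _ => rfl⟩

lemma posSemidef_bordered_zero_iff :
    (bordered a 0 0 S).PosSemidef ↔ 0 ≤ a ∧ S.PosSemidef := by
  refine ⟨fun h => ⟨h.diag_nonneg (i := 0), h.submatrix Fin.succ⟩, fun ⟨ha, hS⟩ => ?_⟩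
  have hS' := posSemidef_iff_isSymm_and.1 hS
  refine posSemidef_iff_isSymm_and.2 ⟨isSymm_bordered a 0 hS'.1, fun x => ?_⟩
  have hform : x ⬝ᵥ bordered a 0 0 S *ᵥ x = a * x 0 ^ 2 + Fin.tail x ⬝ᵥ S *ᵥ Fin.tail x := by
    simp only [dotProduct, mulVec, Fin.sum_univ_succ, bordered_zero_zero, bordered_zero_succ,
      bordered_succ_zero, bordered_succ_succ, Pi.zero_apply, zero_mul, Finset.sum_const_zero,
      zero_add, add_zero, Fin.tail]
    ring
  rw [hform]
  exact add_nonneg (mul_nonneg ha (sq_nonneg _)) (hS'.2 _)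

lemma posSemidef_bordered_iff (ha : a ≠ 0) :
    (bordered a b b S).PosSemidef ↔ 0 ≤ a ∧ (S - a⁻¹ • vecMulVec b b).PosSemidef := by
  have hunit : IsUnit (shear (a⁻¹ • b)) :=
    (isUnit_iff_isUnit_det _).2 (det_shear (a⁻¹ • b) ▸ isUnit_one)
  have hshear := bordered_eq_shear_mul (b := b) (S - a⁻¹ • vecMulVec b b) ha
  rw [sub_add_cancel] at hshear
  rw [hshear, ← conjTranspose_eq_transpose_of_trivial, ← star_eq_conjTranspose,
    hunit.posSemidef_star_right_conjugate_iff, posSemidef_bordered_zero_iff]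

lemma eq_zero_of_posSemidef_bordered_zero (h : (bordered 0 b b S).PosSemidef) : b = 0 := by
  have hzero := (h.dotProduct_mulVec_zero_iff (Pi.single 0 1)).1 (by simp)
  ext i
  simpa using congrFun hzero i.succ

end SchurComplement

section SpaceTimeAngleBound

variable {n : ℕ} {a : ℝ} {b : Fin n → ℝ} {S : Matrix (Fin n) (Fin n) ℝ}

lemma isSymm_sub_smul_vecMulVec (t : ℝ) (b : Fin n → ℝ) (hS : S.IsSymm) :
    (S - t • vecMulVec b b).IsSymm := by
  simpa [sub_eq_add_neg] using! isSymm_add_smul_vecMulVec (-t) b hS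

lemma spaceTimeAngle_bordered_of_pos (ha : 0 < a) (b : Fin n → ℝ) (hS : S.IsSymm) :
    spaceTimeAngle (bordered a b b S) = π / 2 + liftedAngle (S - a⁻¹ • vecMulVec b b) := by
  have h := spaceTimeAngle_bordered ha.ne' b (S := S - a⁻¹ • vecMulVec b b)
    (isSymm_sub_smul_vecMulVec a⁻¹ b hS)
  rwa [sub_add_cancel, mul_comm, Complex.arg_real_mul _ ha, Complex.arg_I] at h

lemma spaceTimeAngle_bordered_of_neg (ha : a < 0) (b : Fin n → ℝ) (hS : S.IsSymm) :
    spaceTimeAngle (bordered a b b S) = -(π / 2) + liftedAngle (S - a⁻¹ • vecMulVec b b) := by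
  have h := spaceTimeAngle_bordered ha.ne b (S := S - a⁻¹ • vecMulVec b b)
    (isSymm_sub_smul_vecMulVec a⁻¹ b hS)
  have harg : Complex.arg (Complex.I * a) = -(π / 2) := by
    rw [← Complex.arg_neg_I, ← Complex.arg_real_mul (-Complex.I) (neg_pos.2 ha)]
    congr 1
    push_cast
    ring
  rwa [sub_add_cancel, harg] at h

lemma spaceTimeAngle_bordered_le_of_neg (ha : a < 0) (b : Fin n → ℝ) (hS : S.IsSymm) :
    spaceTimeAngle (bordered a b b S) ≤ (n - 1) * (π / 2) := by
  rw [spaceTimeAngle_bordered_of_neg ha b hS]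
  linarith [liftedAngle_le (S - a⁻¹ • vecMulVec b b)]

/-- The angle is continuous off the singular set, so this follows from the case of a negative
corner entry. -/
lemma spaceTimeAngle_bordered_zero_le (hb : b ≠ 0) (hS : S.IsSymm) :
    spaceTimeAngle (bordered 0 b b S) ≤ (n - 1) * (π / 2) := by
  have hsymm : (bordered 0 b b S).IsSymm := isSymm_bordered 0 b hS
  have hdet : (cmat (bordered 0 b b S)).det ≠ 0 := fun h =>
    hb (funext fun i => col_zero_eq_zero_of_det_cmat_eq_zero hsymm h i.succ)
  have hcont : Continuous fun δ : ℝ => bordered δ b b S :=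
    continuous_bordered continuous_id continuous_const continuous_const continuous_const
  have hlim : Tendsto (fun δ : ℝ => argSum (cmat (bordered δ b b S))) (nhdsWithin 0 (Set.Iio 0))
      (nhds (argSum (cmat (bordered 0 b b S)))) :=
    ((continuousAt_argSum fun z hz => mem_slitPlane_of_mem_roots_cmat hsymm hdet hz).comp
      (f := fun δ : ℝ => cmat (bordered δ b b S))
      (continuous_cmat.comp hcont).continuousAt).tendsto.mono_left nhdsWithin_le_nhds
  rw [spaceTimeAngle_eq_argSum hdet]
  refine le_of_tendsto hlim (eventually_mem_nhdsWithin.mono fun δ hδ => ?_)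
  rw [← spaceTimeAngle_eq_argSum (det_cmat_bordered_ne_zero (ne_of_lt hδ) b hS)]
  exact spaceTimeAngle_bordered_le_of_neg hδ b hS

end SpaceTimeAngleBound

section CalF

variable {n : ℕ} {c : ℝ}

lemma bordered_mem_calF_iff (hc : n * (π / 2) ≤ c) {a : ℝ} {b : Fin n → ℝ}
    {S : Matrix (Fin n) (Fin n) ℝ} (hS : S.IsSymm) :
    bordered a b b S ∈ calF n c ↔
      ∃ T ∈ Fc n (c - π / 2), (bordered a b b (S - T)).PosSemidef := by
  have hc' : (n - 1) * (π / 2) ≤ c - π / 2 := by linarith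
  rw [calF, Set.mem_ofPred_eq, and_iff_right (isSymm_bordered a b hS)]
  rcases lt_trichotomy a 0 with ha | rfl | ha
  · have hangle := spaceTimeAngle_bordered_le_of_neg ha b hS
    refine iff_of_false (by linarith [pi_pos]) fun ⟨T, _, hT⟩ => ?_
    exact ha.not_ge (hT.diag_nonneg (i := 0))
  · rcases eq_or_ne b 0 with rfl | hb
    · simp only [spaceTimeAngle_bordered_zero hS, posSemidef_bordered_zero_iff, le_refl, true_and]
      refine ⟨fun h => ⟨S, ⟨hS, by linarith⟩, by simpa using PosSemidef.zero⟩, ?_⟩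
      rintro ⟨T, hT, hpos⟩
      have h := (add_posSemidef_mem_Fc hc' hT hpos).2
      rw [add_sub_cancel] at h
      linarith
    · have hangle := spaceTimeAngle_bordered_zero_le hb hS
      exact iff_of_false (by linarith [pi_pos]) fun ⟨T, _, hT⟩ =>
        hb (eq_zero_of_posSemidef_bordered_zero hT)
  · simp only [spaceTimeAngle_bordered_of_pos ha b hS, posSemidef_bordered_iff ha.ne', ha.le,
      true_and]
    constructor
    · intro h
      exact ⟨S - a⁻¹ • vecMulVec b b, ⟨isSymm_sub_smul_vecMulVec a⁻¹ b hS, by linarith⟩,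
        by simpa using PosSemidef.zero⟩
    · rintro ⟨T, hT, hpos⟩
      have h := (add_posSemidef_mem_Fc hc' hT hpos).2
      rw [sub_right_comm, add_sub_cancel] at h
      linarith

lemma mem_calF_iff (hc : n * (π / 2) ≤ c) {A : Matrix (Fin (n + 1)) (Fin (n + 1)) ℝ} :
    A ∈ calF n c ↔ ∃ T ∈ Fc n (c - π / 2), (A - bordered 0 0 0 T).PosSemidef := by
  have hsymm : ∀ T ∈ Fc n (c - π / 2), (A - bordered 0 0 0 T).PosSemidef → A.IsSymm :=
    fun T hT h => by
      simpa using! (isSymm_of_posSemidef h).add (isSymm_bordered 0 0 hT.1)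
  have hsub : ∀ (a : ℝ) (b : Fin n → ℝ) (S T : Matrix (Fin n) (Fin n) ℝ),
      bordered a b b S - bordered 0 0 0 T = bordered a b b (S - T) := fun a b S T => by
    apply ext_of_zero_succ <;> intros <;> simp
  constructor
  · intro hA
    obtain ⟨a, b, S, hS, rfl⟩ := exists_eq_bordered hA.1
    simpa only [hsub] using (bordered_mem_calF_iff hc hS).1 hA
  · rintro ⟨T, hT, hpos⟩
    obtain ⟨a, b, S, hS, rfl⟩ := exists_eq_bordered (hsymm T hT hpos)
    exact (bordered_mem_calF_iff hc hS).2 ⟨T, hT, hsub a b S T ▸ hpos⟩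

lemma posSemidef_of_mem_calF (hc : n * (π / 2) ≤ c) {A : Matrix (Fin (n + 1)) (Fin (n + 1)) ℝ}
    (hA : A ∈ calF n c) : A.PosSemidef := by
  obtain ⟨T, hT, hpos⟩ := (mem_calF_iff hc).1 hA
  have hT' : (bordered 0 0 0 T).PosSemidef :=
    posSemidef_bordered_zero_iff.2 ⟨le_rfl, posSemidef_of_mem_Fc (by linarith) hT⟩
  simpa using hpos.add hT'

lemma convex_calF (hc : n * (π / 2) ≤ c) : Convex ℝ (calF n c) := by
  intro A hA B hB s t hs ht hst
  obtain ⟨T, hT, hTpos⟩ := (mem_calF_iff hc).1 hA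
  obtain ⟨T', hT', hTpos'⟩ := (mem_calF_iff hc).1 hB
  refine (mem_calF_iff hc).2
    ⟨s • T + t • T', convex_Fc (by linarith) hT hT' hs ht hst, ?_⟩
  have hcomb : s • A + t • B - bordered 0 0 0 (s • T + t • T') =
      s • (A - bordered 0 0 0 T) + t • (B - bordered 0 0 0 T') := by
    apply ext_of_zero_succ <;> intros <;> simp
    ring
  exact hcomb ▸ convex_setOf_posSemidef hTpos hTpos' hs ht hst

lemma add_posSemidef_mem_calF (hc : n * (π / 2) ≤ c) {A P : Matrix (Fin (n + 1)) (Fin (n + 1)) ℝ}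
    (hA : A ∈ calF n c) (hP : P.PosSemidef) : A + P ∈ calF n c := by
  obtain ⟨T, hT, hpos⟩ := (mem_calF_iff hc).1 hA
  exact (mem_calF_iff hc).2 ⟨T, hT, by simpa [add_sub_right_comm] using hpos.add hP⟩

lemma nonempty_calF (hc : n * (π / 2) ≤ c) (hc' : c < (n + 1) * (π / 2)) :
    (calF n c).Nonempty := by
  obtain ⟨K, hK⟩ := exists_smul_one_mem_Fc (n := n) (c := c - π / 2) (by linarith)
  exact ⟨_, (mem_calF_iff hc).2 ⟨K • 1, hK, by rw [sub_self]; exact PosSemidef.zero⟩⟩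

end CalF

section Closedness

variable {ι : Type*} [Finite ι]

lemma abs_apply_le_of_posSemidef {A : Matrix ι ι ℝ} (hA : A.PosSemidef) (i j : ι) :
    2 * |A i j| ≤ A i i + A j j := by
  classical
  have := Fintype.ofFinite ι
  obtain ⟨hsymm, hform⟩ := posSemidef_iff_isSymm_and.1 hA
  have hadd := hform (Pi.single i 1 + Pi.single j 1)
  have hsub := hform (Pi.single i 1 - Pi.single j 1)
  simp only [mulVec_add, mulVec_sub, dotProduct_add, dotProduct_sub, add_dotProduct,
    sub_dotProduct, mulVec_single_one, single_one_dotProduct, col_apply, hsymm.apply i j]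
    at hadd hsub
  have habs : |A i j| ≤ (A i i + A j j) / 2 := abs_le.2 ⟨by linarith, by linarith⟩
  linarith

lemma isCompact_setOf_posSemidef_diag_le (R : ℝ) :
    IsCompact {A : Matrix ι ι ℝ | A.PosSemidef ∧ ∀ i, A i i ≤ R} := by
  have hbox : IsCompact (Set.univ.pi fun _ : ι => Set.univ.pi fun _ : ι => Set.Icc (-R) R) :=
    isCompact_univ_pi fun _ => isCompact_univ_pi fun _ => isCompact_Icc
  have hdiag : IsClosed {A : Matrix ι ι ℝ | ∀ i, A i i ≤ R} := by
    rw [Set.ofPred_forall]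
    exact isClosed_iInter fun i =>
      isClosed_le (continuous_id.matrix_elem i i) continuous_const
  refine hbox.of_isClosed_subset (isClosed_setOf_posSemidef.inter hdiag) ?_
  rintro A ⟨hA, hle⟩ i - j -
  refine abs_le.1 ?_
  linarith [abs_apply_le_of_posSemidef hA i j, hle i, hle j]

/-- A matrix of `calF n c` and the matrix of `Fc n (c - π / 2)` below it are bounded by their
diagonals, so on bounded diagonals `calF n c` is the projection of a compact set. -/
lemma isClosed_calF_inter_diag_le {n : ℕ} {c : ℝ} (hc : n * (π / 2) ≤ c) (R : ℝ) :
    IsClosed (calF n c ∩ {A | ∀ i, A i i ≤ R}) := by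
  set C : Set (Matrix (Fin (n + 1)) (Fin (n + 1)) ℝ × Matrix (Fin n) (Fin n) ℝ) :=
    {p | (p.1.PosSemidef ∧ ∀ i, p.1 i i ≤ R) ∧ (p.2.PosSemidef ∧ ∀ i, p.2 i i ≤ R)} ∩
      ({p | p.2 ∈ Fc n (c - π / 2)} ∩ {p | (p.1 - bordered 0 0 0 p.2).PosSemidef})
  have hcompact : IsCompact C := by
    refine ((isCompact_setOf_posSemidef_diag_le R).prod
      (isCompact_setOf_posSemidef_diag_le R)).inter_right (.inter ?_ ?_)
    · exact (isClosed_Fc (by linarith)).preimage continuous_snd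
    · exact isClosed_setOf_posSemidef.preimage (continuous_fst.sub
        (continuous_bordered continuous_const continuous_const continuous_const continuous_snd))
  have himage : calF n c ∩ {A | ∀ i, A i i ≤ R} = Prod.fst '' C := by
    ext A
    constructor
    · rintro ⟨hA, hdiag⟩
      obtain ⟨T, hT, hpos⟩ := (mem_calF_iff hc).1 hA
      refine ⟨(A, T), ⟨⟨⟨posSemidef_of_mem_calF hc hA, hdiag⟩,
        posSemidef_of_mem_Fc (by linarith) hT, fun i => ?_⟩, hT, hpos⟩, rfl⟩
      have hle : 0 ≤ A i.succ i.succ - T i i := hpos.diag_nonneg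
      linarith [hdiag i.succ]
    · rintro ⟨⟨A, T⟩, ⟨⟨⟨-, hdiag⟩, -⟩, hT, hpos⟩, rfl⟩
      exact ⟨(mem_calF_iff hc).2 ⟨T, hT, hpos⟩, hdiag⟩
  exact himage ▸ (hcompact.image continuous_fst).isClosed

lemma isClosed_calF {n : ℕ} {c : ℝ} (hc : n * (π / 2) ≤ c) : IsClosed (calF n c) := by
  refine isClosed_of_closure_subset fun A hA => ?_
  set R := ∑ i, |A i i| + 1
  have hlt : ∀ i, A i i < R := fun i =>
    ((le_abs_self _).trans (Finset.single_le_sum (f := fun i => |A i i|)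
      (fun _ _ => abs_nonneg _) (Finset.mem_univ i))).trans_lt (lt_add_one _)
  have hnhds : {B : Matrix (Fin (n + 1)) (Fin (n + 1)) ℝ | ∀ i, B i i ≤ R} ∈ nhds A := by
    refine eventually_all.2 fun i => ?_
    exact ((continuous_id.matrix_elem i i).tendsto A).eventually_le_const (hlt i)
  have hA' : A ∈ closure (calF n c ∩ {B | ∀ i, B i i ≤ R}) :=
    mem_closure_iff_nhds.2 fun t ht => by
      obtain ⟨B, ⟨hBt, hBR⟩, hB⟩ := mem_closure_iff_nhds.1 hA _ (inter_mem ht hnhds)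
      exact ⟨B, hBt, hB, hBR⟩
  exact ((isClosed_calF_inter_diag_le hc R).closure_subset hA').1

end Closedness

/-- A convex subequation all of whose elements are positive semidefinite: a nonempty closed convex
set of positive semidefinite matrices that is stable under adding positive semidefinite matrices. -/
structure IsConvexSubequation {m : ℕ} (F : Set (Matrix (Fin m) (Fin m) ℝ)) : Prop where
  nonempty : F.Nonempty
  isClosed : IsClosed F
  convex : Convex ℝ F
  posSemidef : ∀ {A}, A ∈ F → A.PosSemidef
  add_mem : ∀ {A P}, A ∈ F → P.PosSemidef → A + P ∈ F

lemma isConvexSubequation_calF {n : ℕ} {c : ℝ} (hc : n * (π / 2) ≤ c)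
    (hc' : c < (n + 1) * (π / 2)) : IsConvexSubequation (calF n c) where
  nonempty := nonempty_calF hc hc'
  isClosed := isClosed_calF hc
  convex := convex_calF hc
  posSemidef := posSemidef_of_mem_calF hc
  add_mem := add_posSemidef_mem_calF hc

/-! ### Half-spaces containing a convex subequation -/

section HalfSpaces

variable {ι : Type*}

section

variable [Fintype ι]

lemma abs_dotProduct_mulVec_le (M : Matrix ι ι ℝ) (x : ι → ℝ) :
    |x ⬝ᵥ M *ᵥ x| ≤ (∑ i, ∑ j, |M i j|) * (x ⬝ᵥ x) := by
  have hle : ∀ i, x i * x i ≤ x ⬝ᵥ x := fun i =>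
    Finset.single_le_sum (f := fun i => x i * x i) (fun i _ => mul_self_nonneg _)
      (Finset.mem_univ i)
  have hmul : ∀ i j, |x i| * |x j| ≤ x ⬝ᵥ x := fun i j => by
    nlinarith [hle i, hle j, sq_nonneg (|x i| - |x j|), abs_mul_abs_self (x i),
      abs_mul_abs_self (x j)]
  calc |x ⬝ᵥ M *ᵥ x| = |∑ i, ∑ j, x i * (M i j * x j)| := by
        simp only [dotProduct, mulVec, Finset.mul_sum]
    _ ≤ ∑ i, ∑ j, |x i * (M i j * x j)| := (Finset.abs_sum_le_sum_abs _ _).trans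
        (Finset.sum_le_sum fun i _ => Finset.abs_sum_le_sum_abs _ _)
    _ ≤ ∑ i, ∑ j, |M i j| * (x ⬝ᵥ x) := by
        gcongr with i _ j _
        rw [abs_mul, abs_mul, mul_left_comm]
        exact mul_le_mul_of_nonneg_left (hmul i j) (abs_nonneg _)
    _ = (∑ i, ∑ j, |M i j|) * (x ⬝ᵥ x) := by simp only [Finset.sum_mul]

variable [DecidableEq ι]

lemma posSemidef_smul_one_add {M : Matrix ι ι ℝ} (hM : M.IsSymm) {K : ℝ}
    (hK : ∑ i, ∑ j, |M i j| ≤ K) : (K • 1 + M).PosSemidef := by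
  refine posSemidef_iff_isSymm_and.2 ⟨(isSymm_one.smul _).add hM, fun x => ?_⟩
  have hx : 0 ≤ x ⬝ᵥ x := dotProduct_self_star_nonneg x
  rw [add_mulVec, dotProduct_add, smul_mulVec, one_mulVec, dotProduct_smul, smul_eq_mul]
  linarith [(abs_le.1 (abs_dotProduct_mulVec_le M x)).1, mul_le_mul_of_nonneg_right hK hx]

end

variable [Finite ι] [DecidableEq ι]

lemma eventually_posSemidef_smul_one_add {M : Matrix ι ι ℝ} {ε : ℝ} (hε : 0 < ε) :
    ∀ᶠ B in nhds (-M), (B + M).IsSymm → (ε • 1 + (B + M)).PosSemidef := by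
  have := Fintype.ofFinite ι
  have hcont : Continuous fun B : Matrix ι ι ℝ => ∑ i, ∑ j, |(B + M) i j| :=
    continuous_finsetSum _ fun i _ => continuous_finsetSum _ fun j _ =>
      ((continuous_id.add continuous_const).matrix_elem i j).abs
  have hlim : Tendsto (fun B : Matrix ι ι ℝ => ∑ i, ∑ j, |(B + M) i j|) (nhds (-M)) (nhds 0) := by
    simpa using hcont.tendsto (-M)
  filter_upwards [hlim.eventually_le_const hε] with B hB hsymm
  exact posSemidef_smul_one_add hsymm hB

/-- A linear functional on matrices that is nonnegative on positive semidefinite matrices and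
positive at the identity: `v ↦ f (hessianMatrix v x)` is then a nonzero degenerate elliptic
operator with constant coefficients. -/
structure IsEllipticFunctional (f : Matrix ι ι ℝ →ₗ[ℝ] ℝ) : Prop where
  nonneg : ∀ {P}, P.PosSemidef → 0 ≤ f P
  map_one_pos : 0 < f 1

lemma map_eq_zero_of_map_one_eq_zero {f : Matrix ι ι ℝ →ₗ[ℝ] ℝ}
    (hf : ∀ {P : Matrix ι ι ℝ}, P.PosSemidef → 0 ≤ f P) (hone : f 1 = 0) {M : Matrix ι ι ℝ}
    (hM : M.IsSymm) : f M = 0 := by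
  have := Fintype.ofFinite ι
  have hnonneg : ∀ {N : Matrix ι ι ℝ}, N.IsSymm → 0 ≤ f N := fun {N} hN => by
    simpa [hone] using hf (posSemidef_smul_one_add hN le_rfl)
  exact le_antisymm (by simpa using hnonneg hM.neg) (hnonneg hM)

end HalfSpaces

section Subequation

variable {m : ℕ} {F : Set (Matrix (Fin m) (Fin m) ℝ)} {A H : Matrix (Fin m) (Fin m) ℝ}

lemma mem_dualSub_of_le {f : Matrix (Fin m) (Fin m) ℝ →ₗ[ℝ] ℝ} {t : ℝ} (hf : 0 < f 1)
    (hF : ∀ B ∈ F, t ≤ f B) (hH : H.IsSymm) (ht : -t ≤ f H) : H ∈ dualSub F := by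
  refine ⟨hH, fun hint => ?_⟩
  have hlim : Tendsto (fun ε : ℝ => -H - ε • (1 : Matrix (Fin m) (Fin m) ℝ))
      (nhdsWithin 0 (Set.Ioi 0)) (nhds (-H)) := by
    have hcont : Continuous fun ε : ℝ => -H - ε • (1 : Matrix (Fin m) (Fin m) ℝ) := by fun_prop
    simpa using (hcont.tendsto 0).mono_left nhdsWithin_le_nhds
  obtain ⟨ε, hε, hpos⟩ := ((hlim.eventually hint.2).and self_mem_nhdsWithin).exists
  have hle := hF _ (hε (hH.neg.sub (isSymm_one.smul ε)))
  rw [map_sub, map_neg, map_smul, smul_eq_mul] at hle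
  linarith [mul_pos hpos hf]

namespace IsConvexSubequation

lemma map_posSemidef_nonneg (hF : IsConvexSubequation F) {f : Matrix (Fin m) (Fin m) ℝ →ₗ[ℝ] ℝ}
    {t : ℝ} (ht : ∀ B ∈ F, t ≤ f B) {P : Matrix (Fin m) (Fin m) ℝ} (hP : P.PosSemidef) :
    0 ≤ f P := by
  by_contra! hneg
  obtain ⟨B, hB⟩ := hF.nonempty
  have hB' := ht B hB
  have hle := ht _ (hF.add_mem hB (hP.smul (show 0 ≤ (f B - t + 1) / -f P from
    div_nonneg (by linarith) (by linarith))))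
  rw [map_add, map_smul, smul_eq_mul] at hle
  have hcancel : (f B - t + 1) / -f P * f P = -(f B - t + 1) := by
    field [hneg.ne]
  linarith

lemma exists_isEllipticFunctional_lt (hF : IsConvexSubequation F) (hA : A.IsSymm) (hAF : A ∉ F) :
    ∃ (f : Matrix (Fin m) (Fin m) ℝ →ₗ[ℝ] ℝ) (t : ℝ),
      IsEllipticFunctional f ∧ (∀ B ∈ F, t ≤ f B) ∧ f A < t := by
  have hclosed : IsClosed (X := Fin m → Fin m → ℝ) F := hF.isClosed
  have hconvex : Convex (E := Fin m → Fin m → ℝ) ℝ F := hF.convex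
  obtain ⟨g, t, hgA, hgF⟩ := geometric_hahn_banach_point_closed (E := Fin m → Fin m → ℝ)
    hconvex hclosed hAF
  let f : Matrix (Fin m) (Fin m) ℝ →ₗ[ℝ] ℝ := g.toLinearMap
  have hfF : ∀ B ∈ F, t < f B := hgF
  have hnonneg : ∀ {P : Matrix (Fin m) (Fin m) ℝ}, P.PosSemidef → 0 ≤ f P :=
    hF.map_posSemidef_nonneg fun B hB => (hfF B hB).le
  refine ⟨f, t, ⟨hnonneg, (hnonneg .one).lt_of_ne' fun hone => ?_⟩, fun B hB => (hfF B hB).le, hgA⟩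
  obtain ⟨B, hB⟩ := hF.nonempty
  have hlt : f A < f B := lt_trans hgA (hfF B hB)
  rw [map_eq_zero_of_map_one_eq_zero hnonneg hone hA, map_eq_zero_of_map_one_eq_zero hnonneg hone
    (isSymm_of_posSemidef (hF.posSemidef hB))] at hlt
  exact hlt.false

lemma not_posSemidef_neg_add (hF : IsConvexSubequation F) (hA : A ∈ F) (hH : H ∈ dualSub F)
    {ε : ℝ} (hε : 0 < ε) : ¬(-(A + H) - ε • 1).PosSemidef := by
  intro hpos
  refine hH.2 ⟨hH.1.neg, ?_⟩
  filter_upwards [eventually_posSemidef_smul_one_add (M := H) hε] with B hB hBsymm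
  have hsum : A + ((-(A + H) - ε • 1) + (ε • 1 + (B + H))) = B := by abel
  exact hsum ▸ hF.add_mem hA (hpos.add (hB (hBsymm.add hH.1)))

end IsConvexSubequation

end Subequation

/-! ### Hessians -/

section Hessian

variable {m : ℕ} {v w : (Fin m → ℝ) → ℝ} {x : Fin m → ℝ}

lemma hessianMatrix_apply (v : (Fin m → ℝ) → ℝ) (x : Fin m → ℝ) (i j : Fin m) :
    hessianMatrix v x i j = fderiv ℝ (fderiv ℝ v) x (Pi.single i 1) (Pi.single j 1) := by
  simp [hessianMatrix, iteratedFDeriv_two_apply]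

lemma hessianMatrix_eq_of {B : (Fin m → ℝ) →L[ℝ] (Fin m → ℝ) →L[ℝ] ℝ}
    {v' : (Fin m → ℝ) → (Fin m → ℝ) →L[ℝ] ℝ} (hv : ∀ y, HasFDerivAt v (v' y) y)
    (hv' : HasFDerivAt v' B x) :
    hessianMatrix v x = of fun i j => B (Pi.single i 1) (Pi.single j 1) := by
  ext i j
  rw [hessianMatrix_apply, funext fun y => (hv y).fderiv, hv'.fderiv, of_apply]

lemma isSymm_hessianMatrix (hv : ContDiffAt ℝ 2 v x) : (hessianMatrix v x).IsSymm := by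
  ext i j
  simpa only [transpose_apply, hessianMatrix_apply] using
    hv.isSymmSndFDerivAt (by simp) (Pi.single j 1) (Pi.single i 1)

lemma dotProduct_hessianMatrix_mulVec (v : (Fin m → ℝ) → ℝ) (x ξ η : Fin m → ℝ) :
    ξ ⬝ᵥ hessianMatrix v x *ᵥ η = fderiv ℝ (fderiv ℝ v) x ξ η := by
  conv_rhs => rw [pi_eq_sum_univ' ξ, pi_eq_sum_univ' η]
  simp only [dotProduct, mulVec, hessianMatrix_apply, Finset.mul_sum, map_sum, map_smul,
    _root_.sum_apply, _root_.smul_apply, smul_eq_mul]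
  rw [Finset.sum_comm]
  exact Finset.sum_congr rfl fun i _ => Finset.sum_congr rfl fun j _ => by ring

lemma hessianMatrix_add (hv : ContDiffAt ℝ 2 v x) (hw : ContDiffAt ℝ 2 w x) :
    hessianMatrix (fun y => v y + w y) x = hessianMatrix v x + hessianMatrix w x := by
  ext i j
  exact DFunLike.congr_fun (iteratedFDeriv_add_apply (i := 2) hv hw)
    ![Pi.single i 1, Pi.single j 1]

lemma hessianMatrix_add_const (hv : ContDiffAt ℝ 2 v x) (s : ℝ) :
    hessianMatrix (fun y => v y + s) x = hessianMatrix v x := by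
  have hzero : hessianMatrix (fun _ => s) x = 0 := by
    ext i j
    simp [hessianMatrix, iteratedFDeriv_const_of_ne (two_ne_zero)]
  rw [hessianMatrix_add hv contDiffAt_const, hzero, add_zero]

lemma hessianMatrix_congr (h : v =ᶠ[nhds x] w) :
    hessianMatrix v x = hessianMatrix w x := by
  rw [hessianMatrix, hessianMatrix, (h.iteratedFDeriv ℝ 2).eq_of_nhds]

lemma hessianMatrix_const_mul (hv : ContDiffAt ℝ 2 v x) (s : ℝ) :
    hessianMatrix (fun y => s * v y) x = s • hessianMatrix v x := by
  ext i j
  exact DFunLike.congr_fun (iteratedFDeriv_const_smul_apply (i := 2) (a := s) hv)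
    ![Pi.single i 1, Pi.single j 1]

lemma hessianMatrix_comp_add_right (v : (Fin m → ℝ) → ℝ) (x a : Fin m → ℝ) :
    hessianMatrix (fun y => v (y + a)) x = hessianMatrix v (x + a) := by
  simp only [hessianMatrix, iteratedFDeriv_comp_add_right]

lemma continuous_hessianMatrix (hv : ContDiff ℝ 2 v) : Continuous (hessianMatrix v) := by
  refine continuous_matrix fun i j => ?_
  have hv' : Continuous (fderiv ℝ (fderiv ℝ v)) :=
    (hv.fderiv_right (m := 1) (by norm_num)).continuous_fderiv (by simp)
  simp only [hessianMatrix_apply]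
  exact (hv'.clm_apply continuous_const).clm_apply continuous_const

lemma contDiff_affineMap {k : WithTop ℕ∞} (a : (Fin m → ℝ) →ᵃ[ℝ] ℝ) : ContDiff ℝ k a :=
  (⟨a, a.continuous_of_finiteDimensional⟩ : (Fin m → ℝ) →ᴬ[ℝ] ℝ).contDiff

lemma hessianMatrix_affineMap (a : (Fin m → ℝ) →ᵃ[ℝ] ℝ) (x : Fin m → ℝ) :
    hessianMatrix a x = 0 := by
  have ha : ∀ y, HasFDerivAt a (LinearMap.toContinuousLinearMap a.linear) y := fun y => by
    rw [a.decomp]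
    exact (LinearMap.toContinuousLinearMap a.linear).hasFDerivAt.add_const _
  ext i j
  simp [hessianMatrix_eq_of ha (hasFDerivAt_const _ x)]

lemma contDiff_dotProduct_mulVec_sub {k : WithTop ℕ∞} (M : Matrix (Fin m) (Fin m) ℝ)
    (a : Fin m → ℝ) : ContDiff ℝ k fun y => (y - a) ⬝ᵥ M *ᵥ (y - a) := by
  simp only [dotProduct, mulVec, Pi.sub_apply]
  fun_prop

lemma hessianMatrix_dotProduct_mulVec_sub (M : Matrix (Fin m) (Fin m) ℝ) (a x : Fin m → ℝ) :
    hessianMatrix (fun y => (y - a) ⬝ᵥ M *ᵥ (y - a)) x = M + Mᵀ := by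
  obtain ⟨B, hB⟩ : ∃ B : (Fin m → ℝ) →L[ℝ] (Fin m → ℝ) →L[ℝ] ℝ, ∀ y z, B y z = y ⬝ᵥ M *ᵥ z := ⟨
    LinearMap.toContinuousBilinearMap (Matrix.toLinearMap₂' ℝ M), Matrix.toLinearMap₂'_apply' M⟩
  have hsub : ∀ y, HasFDerivAt (fun y => y - a) (.id ℝ (Fin m → ℝ)) y := fun y =>
    (hasFDerivAt_id y).sub_const a
  have hfirst : ∀ y, HasFDerivAt (fun y => (y - a) ⬝ᵥ M *ᵥ (y - a)) ((B + B.flip) (y - a)) y := by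
    intro y
    simp only [← hB]
    refine (B.hasFDerivAt_of_bilinear (hsub y) (hsub y)).congr_fderiv ?_
    ext η
    simp
  have hsecond : HasFDerivAt (fun y => (B + B.flip) (y - a)) (B + B.flip) x :=
    (B + B.flip).hasFDerivAt.comp x (hsub x)
  ext i j
  rw [hessianMatrix_eq_of hfirst hsecond, of_apply, _root_.add_apply,
    _root_.add_apply, ContinuousLinearMap.flip_apply, hB, hB]
  simp

lemma contDiff_dotProduct_self_sub {k : WithTop ℕ∞} (a : Fin m → ℝ) :
    ContDiff ℝ k fun y => (y - a) ⬝ᵥ (y - a) := by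
  simpa using contDiff_dotProduct_mulVec_sub 1 a

lemma hessianMatrix_dotProduct_self_sub (a x : Fin m → ℝ) :
    hessianMatrix (fun y => (y - a) ⬝ᵥ (y - a)) x = (2 : ℝ) • 1 := by
  simpa [two_smul] using hessianMatrix_dotProduct_mulVec_sub 1 a x

lemma hasDerivAt_add_smul (x ξ : Fin m → ℝ) (t : ℝ) :
    HasDerivAt (fun t : ℝ => x + t • ξ) ξ t := by
  simpa using ((hasDerivAt_id t).smul_const ξ).const_add x

lemma deriv_deriv_comp_line (hv : ContDiffAt ℝ 2 v x) (ξ : Fin m → ℝ) :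
    deriv (deriv fun t : ℝ => v (x + t • ξ)) 0 = ξ ⬝ᵥ hessianMatrix v x *ᵥ ξ := by
  have hline : Tendsto (fun t : ℝ => x + t • ξ) (nhds 0) (nhds x) := by
    simpa using (hasDerivAt_add_smul x ξ 0).continuousAt.tendsto
  have hfirst : deriv (fun t : ℝ => v (x + t • ξ)) =ᶠ[nhds 0]
      fun t => fderiv ℝ v (x + t • ξ) ξ := by
    filter_upwards [hline.eventually (hv.eventually (by simp))] with t ht
    exact ((ht.differentiableAt (by simp)).hasFDerivAt.comp_hasDerivAt t
      (hasDerivAt_add_smul x ξ t)).deriv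
  have hsecond : HasFDerivAt (fderiv ℝ v) (fderiv ℝ (fderiv ℝ v) x) (x + (0 : ℝ) • ξ) := by
    simpa using ((hv.fderiv_right (m := 1) (by norm_num)).differentiableAt (by simp)).hasFDerivAt
  rw [hfirst.deriv_eq, dotProduct_hessianMatrix_mulVec]
  exact ((ContinuousLinearMap.apply ℝ ℝ ξ).hasFDerivAt.comp_hasDerivAt 0
    (hsecond.comp_hasDerivAt 0 (hasDerivAt_add_smul x ξ 0))).deriv

lemma deriv_deriv_nonpos_of_isLocalMax {φ : ℝ → ℝ} {t : ℝ} (hφ : ContinuousAt φ t)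
    (hmax : IsLocalMax φ t) : deriv (deriv φ) t ≤ 0 := by
  by_contra! hpos
  have hmin : IsLocalMin φ t := isLocalMin_of_deriv_deriv_pos hpos hmax.deriv_eq_zero hφ
  have hconst : φ =ᶠ[nhds t] fun _ => φ t := by
    filter_upwards [hmax, hmin] with s hle hge using le_antisymm hle hge
  simp [hconst.deriv.deriv_eq] at hpos

lemma posSemidef_neg_hessianMatrix (hv : ContDiffAt ℝ 2 v x) (hmax : IsLocalMax v x) :
    (-hessianMatrix v x).PosSemidef := by
  refine posSemidef_iff_isSymm_and.2 ⟨(isSymm_hessianMatrix hv).neg, fun ξ => ?_⟩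
  have hline : ContinuousAt (fun t : ℝ => x + t • ξ) 0 := (hasDerivAt_add_smul x ξ 0).continuousAt
  have hzero : x + (0 : ℝ) • ξ = x := by simp
  have hmax' : IsLocalMax (v ∘ fun t : ℝ => x + t • ξ) 0 :=
    (hzero.symm ▸ hmax : IsLocalMax v (x + (0 : ℝ) • ξ)).comp_continuous
      (g := fun t : ℝ => x + t • ξ) hline
  have hle := deriv_deriv_nonpos_of_isLocalMax
    (ContinuousAt.comp' (hzero.symm ▸ hv.continuousAt) hline) hmax'
  rw [deriv_deriv_comp_line hv] at hle
  rw [neg_mulVec, dotProduct_neg]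
  linarith

end Hessian

/-! ### The maximum principle -/

section MaximumPrinciple

variable {m : ℕ} {U K : Set (Fin m → ℝ)} {G : (Fin m → ℝ) → ℝ} {x : Fin m → ℝ} {M : ℝ}

/-- Adding a small multiple of the squared distance to `x` keeps the maximum over `K` off the
frontier. -/
lemma exists_posSemidef_neg_hessianMatrix_sub (hU : IsOpen U) (hK : IsCompact K) (hKU : K ⊆ U)
    (hG : ContDiffOn ℝ 2 G U) (hfr : ∀ y ∈ frontier K, G y ≤ M) (hx : x ∈ K) (hM : M < G x) :
    ∃ y ∈ K, ∃ ε > (0 : ℝ), (-hessianMatrix G y - ε • 1).PosSemidef := by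
  set d : (Fin m → ℝ) → ℝ := fun y => (y - x) ⬝ᵥ (y - x)
  have hd : ContDiff ℝ 2 d := contDiff_dotProduct_self_sub x
  obtain ⟨R, hR⟩ := (hK.image hd.continuous).bddAbove
  have hdR : ∀ y ∈ K, d y ≤ R := fun y hy => hR ⟨y, hy, rfl⟩
  have hR0 : 0 ≤ R := (dotProduct_self_star_nonneg _).trans (hdR x hx)
  obtain ⟨ε, hε, hεR⟩ : ∃ ε > 0, ε * R < G x - M := by
    refine ⟨(G x - M) / (R + 1), div_pos (by linarith) (by linarith), ?_⟩
    rw [div_mul_eq_mul_div, div_lt_iff₀ (by linarith)]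
    nlinarith
  have hGd : ContDiffOn ℝ 2 (fun y => G y + ε * d y) U :=
    hG.add (contDiff_const.mul hd).contDiffOn
  obtain ⟨y, hy, hmax⟩ := hK.exists_isMaxOn ⟨x, hx⟩ (hGd.continuousOn.mono hKU)
  have hxy : G x ≤ G y + ε * d y := by simpa [d] using hmax hx
  have hint : y ∈ interior K := by
    by_contra hnot
    linarith [hfr y ⟨subset_closure hy, hnot⟩, mul_le_mul_of_nonneg_left (hdR y hy) hε.le]
  have hlocal : IsLocalMax (fun y => G y + ε * d y) y := by
    filter_upwards [mem_interior_iff_mem_nhds.1 hint] with z hz using hmax hz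
  have hUy : U ∈ nhds y := hU.mem_nhds (hKU hy)
  have hpos := posSemidef_neg_hessianMatrix (hGd.contDiffAt hUy) hlocal
  rw [hessianMatrix_add (hG.contDiffAt hUy) (contDiff_const.mul hd).contDiffAt,
    hessianMatrix_const_mul hd.contDiffAt, hessianMatrix_dotProduct_self_sub, neg_add',
    smul_smul] at hpos
  exact ⟨y, hy, ε * 2, by positivity, hpos⟩

lemma IsEllipticFunctional.le_of_frontier_le {f : Matrix (Fin m) (Fin m) ℝ →ₗ[ℝ] ℝ}
    (hf : IsEllipticFunctional f) (hU : IsOpen U) (hK : IsCompact K) (hKU : K ⊆ U)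
    (hG : ContDiffOn ℝ 2 G U) (hfG : ∀ y ∈ K, 0 ≤ f (hessianMatrix G y))
    (hfr : ∀ y ∈ frontier K, G y ≤ M) (hx : x ∈ K) :
    G x ≤ M := by
  by_contra! hM
  obtain ⟨y, hy, ε, hε, hpos⟩ := exists_posSemidef_neg_hessianMatrix_sub hU hK hKU hG hfr hx hM
  have hle := hf.nonneg hpos
  rw [map_sub, map_neg, map_smul, smul_eq_mul] at hle
  linarith [hfG y hy, mul_pos hε hf.map_one_pos]

lemma IsConvexSubequation.isTypeF_of_hessianMatrix_mem {F : Set (Matrix (Fin m) (Fin m) ℝ)}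
    (hF : IsConvexSubequation F) (hU : IsOpen U) (hG : ContDiffOn ℝ 2 G U)
    (hGF : ∀ y ∈ U, hessianMatrix G y ∈ F) : IsTypeF F U fun y => (G y : EReal) := by
  refine ⟨fun y _ => EReal.coe_ne_top _,
    (continuous_coe_real_ereal.comp_continuousOn hG.continuousOn).upperSemicontinuousOn,
    fun v hv hvF a K hK hKU hfr x hx => ?_⟩
  simp only [← EReal.coe_add, EReal.coe_le_coe_iff] at hfr ⊢
  by_contra! hlt
  have ha := contDiff_affineMap (k := 2) a
  have hna : ContDiff ℝ 2 fun y => -1 * a y := contDiff_const.mul ha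
  obtain ⟨y, hy, ε, hε, hpos⟩ := exists_posSemidef_neg_hessianMatrix_sub hU hK hKU (M := 0)
    ((hG.add hv).add hna.contDiffOn) (fun y hy => by linarith [hfr y hy]) hx (by linarith)
  have hUy : U ∈ nhds y := hU.mem_nhds (hKU hy)
  have hGy := hG.contDiffAt hUy
  have hvy := hv.contDiffAt hUy
  rw [hessianMatrix_add (hGy.add hvy) hna.contDiffAt, hessianMatrix_add hGy hvy,
    hessianMatrix_const_mul ha.contDiffAt, hessianMatrix_affineMap, smul_zero, add_zero] at hpos
  exact hF.not_posSemidef_neg_add (hGF y (hKU hy)) (hvF y (hKU hy)) hε hpos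

end MaximumPrinciple

/-! ### The Dirichlet problem for polynomials -/

section EuclideanBall

variable {m : ℕ}

/-- The closed Euclidean ball of radius `r` about `x`; the metric of `Fin m → ℝ` itself is the sup
metric. -/
def euclideanClosedBall (x : Fin m → ℝ) (r : ℝ) : Set (Fin m → ℝ) :=
  {y | (y - x) ⬝ᵥ (y - x) ≤ r ^ 2}

lemma continuous_dotProduct_self_sub (x : Fin m → ℝ) : Continuous fun y => (y - x) ⬝ᵥ (y - x) :=
  (contDiff_dotProduct_self_sub (k := 0) x).continuous

lemma mem_euclideanClosedBall_self (x : Fin m → ℝ) (r : ℝ) : x ∈ euclideanClosedBall x r := by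
  simp [euclideanClosedBall, sq_nonneg]

lemma euclideanClosedBall_subset_closedBall (x : Fin m → ℝ) {r : ℝ} (hr : 0 ≤ r) :
    euclideanClosedBall x r ⊆ Metric.closedBall x r := by
  intro y hy
  refine (dist_pi_le_iff hr).2 fun i => abs_le_of_sq_le_sq ?_ hr
  refine (Finset.single_le_sum (f := fun i => (y - x) i * (y - x) i)
    (fun i _ => mul_self_nonneg _) (Finset.mem_univ i)).trans' ?_ |>.trans hy
  simp [sq]

lemma isCompact_euclideanClosedBall (x : Fin m → ℝ) {r : ℝ} (hr : 0 ≤ r) :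
    IsCompact (euclideanClosedBall x r) :=
  (isCompact_closedBall x r).of_isClosed_subset
    (isClosed_le (continuous_dotProduct_self_sub x) continuous_const)
    (euclideanClosedBall_subset_closedBall x hr)

lemma euclideanClosedBall_mem_nhds (x : Fin m → ℝ) {r : ℝ} (hr : 0 < r) :
    euclideanClosedBall x r ∈ nhds x :=
  ((continuous_dotProduct_self_sub x).tendsto' x 0 (by simp)).eventually_le_const (by positivity)

lemma dotProduct_self_eq_of_mem_frontier {x y : Fin m → ℝ} {r : ℝ}
    (hy : y ∈ frontier (euclideanClosedBall x r)) : (y - x) ⬝ᵥ (y - x) = r ^ 2 :=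
  frontier_le_subset_eq (continuous_dotProduct_self_sub x) continuous_const hy

end EuclideanBall

section Polynomial

open MvPolynomial

variable {σ : Type*}

lemma totalDegree_pderiv_le {R : Type*} [CommSemiring R] (p : MvPolynomial σ R) (i : σ) :
    (pderiv i p).totalDegree ≤ p.totalDegree - 1 := by
  refine Finset.sup_le fun s hs => ?_
  rw [mem_support_iff, coeff_pderiv] at hs
  have hle := le_totalDegree (mem_support_iff.2 (left_ne_zero_of_mul hs))
  rw [Finsupp.sum_add_index' (by simp) (by simp), Finsupp.sum_single_index rfl] at hle
  omega

variable [Fintype σ]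

lemma hasFDerivAt_eval (p : MvPolynomial σ ℝ) (x : σ → ℝ) :
    HasFDerivAt (fun y => eval y p)
      (∑ i, eval x (pderiv i p) • ContinuousLinearMap.proj (R := ℝ) (φ := fun _ => ℝ) i) x := by
  induction p using MvPolynomial.induction_on with
  | C a => simpa using hasFDerivAt_const a x
  | add p q hp hq => simpa [add_smul, Finset.sum_add_distrib] using hp.fun_add hq
  | mul_X p k hp =>
    classical
    have hX : HasFDerivAt (fun y : σ → ℝ => y k)
        (ContinuousLinearMap.proj (R := ℝ) (φ := fun _ => ℝ) k) x := hasFDerivAt_apply k x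
    simp only [map_mul, eval_X]
    refine (hp.fun_mul hX).congr_fderiv ?_
    ext ξ
    simp [pderiv_X, Pi.single_apply, apply_ite, mul_add, Finset.sum_add_distrib, Finset.mul_sum,
      mul_comm, mul_left_comm]

lemma contDiff_eval {k : WithTop ℕ∞} (p : MvPolynomial σ ℝ) :
    ContDiff ℝ k fun y => eval y p := by
  induction p using MvPolynomial.induction_on with
  | C a => simpa using contDiff_const
  | add p q hp hq => simpa using hp.add hq
  | mul_X p k hp => simpa using hp.mul (contDiff_apply ℝ ℝ k)

variable {m : ℕ}

lemma hessianMatrix_eval (p : MvPolynomial (Fin m) ℝ) (x : Fin m → ℝ) :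
    hessianMatrix (fun y => eval y p) x = of fun i j => eval x (pderiv i (pderiv j p)) := by
  have hsecond := HasFDerivAt.fun_sum (u := Finset.univ) fun j _ =>
    (hasFDerivAt_eval (pderiv j p) x).smul_const
      (ContinuousLinearMap.proj (R := ℝ) (φ := fun _ : Fin m => ℝ) j)
  ext i j
  simp [hessianMatrix_eq_of (hasFDerivAt_eval p) hsecond, Pi.single_apply]

/-- The operator `p ↦ f (D²p)` on polynomials. -/
noncomputable def hessianOperator (f : Matrix (Fin m) (Fin m) ℝ →ₗ[ℝ] ℝ) :
    MvPolynomial (Fin m) ℝ →ₗ[ℝ] MvPolynomial (Fin m) ℝ :=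
  ∑ i, ∑ j, f (single i j 1) • (pderiv i).toLinearMap ∘ₗ (pderiv j).toLinearMap

lemma hessianOperator_apply (f : Matrix (Fin m) (Fin m) ℝ →ₗ[ℝ] ℝ) (p : MvPolynomial (Fin m) ℝ) :
    hessianOperator f p = ∑ i, ∑ j, f (single i j 1) • pderiv i (pderiv j p) := by
  simp [hessianOperator, LinearMap.sum_apply]

lemma eval_hessianOperator (f : Matrix (Fin m) (Fin m) ℝ →ₗ[ℝ] ℝ) (p : MvPolynomial (Fin m) ℝ)
    (x : Fin m → ℝ) :
    eval x (hessianOperator f p) = f (hessianMatrix (fun y => eval y p) x) := by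
  rw [hessianMatrix_eval, matrix_eq_sum_single (of _), hessianOperator_apply]
  simp only [map_sum, smul_eval, of_apply]
  refine Finset.sum_congr rfl fun i _ => Finset.sum_congr rfl fun j _ => ?_
  rw [mul_comm, ← smul_eq_mul, ← map_smul, smul_single, smul_eq_mul, mul_one]

lemma totalDegree_hessianOperator_le (f : Matrix (Fin m) (Fin m) ℝ →ₗ[ℝ] ℝ)
    (p : MvPolynomial (Fin m) ℝ) : (hessianOperator f p).totalDegree ≤ p.totalDegree - 2 := by
  rw [hessianOperator_apply]
  refine totalDegree_finsetSum_le fun i _ => totalDegree_finsetSum_le fun j _ => ?_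
  have hi := totalDegree_pderiv_le (pderiv j p) i
  have hj := totalDegree_pderiv_le p j
  exact (totalDegree_smul_le _ _).trans (by omega)

end Polynomial

section Dirichlet

open MvPolynomial

variable {m : ℕ} {f : Matrix (Fin m) (Fin m) ℝ →ₗ[ℝ] ℝ} {x : Fin m → ℝ} {r : ℝ}

/-- The polynomial `r² - |y - x|²`, which cuts out the Euclidean sphere of radius `r` about `x`. -/
noncomputable def spherePolynomial (x : Fin m → ℝ) (r : ℝ) : MvPolynomial (Fin m) ℝ :=
  C (r ^ 2) - ∑ i, (X i - C (x i)) ^ 2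

lemma eval_spherePolynomial (x y : Fin m → ℝ) (r : ℝ) :
    eval y (spherePolynomial x r) = r ^ 2 - (y - x) ⬝ᵥ (y - x) := by
  simp [spherePolynomial, dotProduct, sq]

lemma totalDegree_spherePolynomial_le (x : Fin m → ℝ) (r : ℝ) :
    (spherePolynomial x r).totalDegree ≤ 2 := by
  refine (totalDegree_sub _ _).trans (max_le ((totalDegree_C _).trans_le zero_le)
    (totalDegree_finsetSum_le fun i _ => ?_))
  have hpow := totalDegree_pow (X i - C (x i)) 2
  have hsub := totalDegree_sub_C_le (X i) (x i)
  rw [totalDegree_X] at hsub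
  omega

lemma spherePolynomial_ne_zero (x : Fin m → ℝ) (hr : r ≠ 0) : spherePolynomial x r ≠ 0 := by
  intro hzero
  have heval := eval_spherePolynomial x x r
  rw [hzero, map_zero, sub_self, zero_dotProduct, sub_zero] at heval
  exact pow_ne_zero 2 hr heval.symm

lemma eq_zero_of_forall_mem_nhds {p : MvPolynomial (Fin m) ℝ} {s : Set (Fin m → ℝ)}
    (hs : s ∈ nhds x) (hp : ∀ y ∈ s, eval y p = 0) : p = 0 := by
  obtain ⟨δ, hδ, hball⟩ := Metric.mem_nhds_iff.1 hs
  refine MvPolynomial.funext_set (fun i => Metric.ball (x i) δ) (fun i => ?_) fun y hy => ?_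
  · rw [Real.ball_eq_Ioo]
    exact Set.Ioo_infinite (by linarith)
  · rw [map_zero, hp y (hball (by rwa [ball_pi _ hδ]))]

namespace IsEllipticFunctional

lemma eval_nonpos_of_hessianOperator_eq_zero (hf : IsEllipticFunctional f) (hr : 0 ≤ r)
    {p : MvPolynomial (Fin m) ℝ} (hp : hessianOperator f p = 0)
    (hsphere : ∀ y, (y - x) ⬝ᵥ (y - x) = r ^ 2 → eval y p = 0) {y : Fin m → ℝ}
    (hy : y ∈ euclideanClosedBall x r) : eval y p ≤ 0 := by
  refine hf.le_of_frontier_le isOpen_univ (isCompact_euclideanClosedBall x hr)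
    (Set.subset_univ _) (contDiff_eval p).contDiffOn (fun z _ => ?_)
    (fun z hz => (hsphere z (dotProduct_self_eq_of_mem_frontier hz)).le) hy
  rw [← eval_hessianOperator, hp, map_zero]

lemma eq_zero_of_hessianOperator_eq_zero (hf : IsEllipticFunctional f) (hr : 0 < r)
    {p : MvPolynomial (Fin m) ℝ} (hp : hessianOperator f p = 0)
    (hsphere : ∀ y, (y - x) ⬝ᵥ (y - x) = r ^ 2 → eval y p = 0) : p = 0 := by
  refine eq_zero_of_forall_mem_nhds (euclideanClosedBall_mem_nhds x hr) fun y hy => ?_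
  refine le_antisymm (hf.eval_nonpos_of_hessianOperator_eq_zero hr.le hp hsphere hy) ?_
  have hneg := hf.eval_nonpos_of_hessianOperator_eq_zero hr.le (p := -p) (by simp [hp])
    (fun z hz => by simp [hsphere z hz]) hy
  simpa using hneg

/-- On polynomials of bounded degree, `q ↦ f (D²(E q))` with `E` the equation of the sphere is an
injective endomorphism of a finite-dimensional space, hence surjective. -/
lemma exists_hessianOperator_spherePolynomial_mul_eq (hf : IsEllipticFunctional f) (x : Fin m → ℝ)
    (hr : 0 < r) (p : MvPolynomial (Fin m) ℝ) :
    ∃ q, hessianOperator f (spherePolynomial x r * q) = p := by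
  set E := spherePolynomial x r
  set V := restrictTotalDegree (Fin m) ℝ p.totalDegree
  have hdeg : ∀ q ∈ V, (hessianOperator f ∘ₗ LinearMap.mulLeft ℝ E) q ∈ V := by
    intro q hq
    rw [mem_restrictTotalDegree] at hq ⊢
    have hL := totalDegree_hessianOperator_le f (E * q)
    have hmul := totalDegree_mul E q
    have hE : E.totalDegree ≤ 2 := totalDegree_spherePolynomial_le x r
    exact hL.trans (by omega)
  set T : V →ₗ[ℝ] V := (hessianOperator f ∘ₗ LinearMap.mulLeft ℝ E).restrict hdeg
  have hker : ∀ q, hessianOperator f (E * q) = 0 → q = 0 := fun q hq =>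
    (mul_eq_zero.1 (hf.eq_zero_of_hessianOperator_eq_zero hr hq fun y hy => by
      rw [map_mul, eval_spherePolynomial, hy, sub_self, zero_mul])).resolve_left
      (spherePolynomial_ne_zero x hr.ne')
  have hinj : Function.Injective T :=
    LinearMap.ker_eq_bot.1 (LinearMap.ker_eq_bot'.2 fun q hq =>
      Subtype.ext (hker q (congrArg Subtype.val hq)))
  obtain ⟨q, hq⟩ := LinearMap.injective_iff_surjective.1 hinj
    ⟨p, (mem_restrictTotalDegree _ _ _).2 le_rfl⟩
  exact ⟨q, congrArg Subtype.val hq⟩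

lemma exists_eval_eq_on_sphere (hf : IsEllipticFunctional f) (x : Fin m → ℝ) (hr : 0 < r)
    (p : MvPolynomial (Fin m) ℝ) :
    ∃ h : MvPolynomial (Fin m) ℝ, hessianOperator f h = 0 ∧
      ∀ y, (y - x) ⬝ᵥ (y - x) = r ^ 2 → eval y h = eval y p := by
  obtain ⟨q, hq⟩ := hf.exists_hessianOperator_spherePolynomial_mul_eq x hr (hessianOperator f p)
  refine ⟨p - spherePolynomial x r * q, by rw [map_sub, hq, sub_self], fun y hy => ?_⟩
  rw [map_sub, map_mul, eval_spherePolynomial, hy, sub_self, zero_mul, sub_zero]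

end IsEllipticFunctional

end Dirichlet

/-! ### Mollification -/

section Mollification

open MeasureTheory

lemma exists_abs_eval_sub_lt {m : ℕ} {K : Set (Fin m → ℝ)} (hK : IsCompact K)
    {φ : (Fin m → ℝ) → ℝ} (hφ : Continuous φ) {ε : ℝ} (hε : 0 < ε) :
    ∃ p : MvPolynomial (Fin m) ℝ, ∀ y ∈ K, |MvPolynomial.eval y p - φ y| < ε := by
  let X : Fin m → C(Fin m → ℝ, ℝ) := fun i => ⟨fun y => y i, continuous_apply i⟩
  have heval : ∀ (p : MvPolynomial (Fin m) ℝ) (y : Fin m → ℝ),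
      (MvPolynomial.aeval X p : C(Fin m → ℝ, ℝ)) y = MvPolynomial.eval y p := by
    intro p y
    induction p using MvPolynomial.induction_on with
    | C a => simp
    | add p q hp hq => simp [hp, hq]
    | mul_X p i hp => simp [hp, X]
  have hsep : (MvPolynomial.aeval (R := ℝ) X).range.SeparatesPoints := fun x y hxy => by
    obtain ⟨i, hi⟩ := Function.ne_iff.1 hxy
    exact ⟨X i, ⟨X i, ⟨MvPolynomial.X i, by simp⟩, rfl⟩, hi⟩
  obtain ⟨_, ⟨p, rfl⟩, hp⟩ :=
    ContinuousMap.exists_mem_subalgebra_near_continuous_of_isCompact_of_separatesPoints hsep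
      ⟨φ, hφ⟩ hK hε
  exact ⟨p, fun y hy => heval p y ▸ hp y hy⟩

section Convex

variable {G E : Type*} [NormedAddCommGroup G] [NormedSpace ℝ G] [HasContDiffBump G]
  [FiniteDimensional ℝ G] [MeasurableSpace G] [BorelSpace G] {μ : Measure G}
  [IsLocallyFiniteMeasure μ] [μ.IsOpenPosMeasure] [NormedAddCommGroup E] [NormedSpace ℝ E]
  [CompleteSpace E]

/-- Convolution with a bump function is an average, so it stays in closed convex sets. -/
lemma convolution_normed_mem (φ : ContDiffBump (0 : G)) {w : G → E} (hw : Continuous w) {s : Set E}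
    (hs : Convex ℝ s) (hs' : IsClosed s) {x : G} (hws : ∀ y ∈ Metric.ball x φ.rOut, w y ∈ s) :
    convolution (φ.normed μ) w (ContinuousLinearMap.lsmul ℝ ℝ) μ x ∈ s := by
  set d : G → ENNReal := fun z => ENNReal.ofReal (φ.normed μ z)
  have hd : Measurable d := φ.continuous_normed.measurable.ennreal_ofReal
  have hprob : IsProbabilityMeasure (μ.withDensity d) := by
    constructor
    rw [withDensity_apply _ .univ, Measure.restrict_univ,
      ← ofReal_integral_eq_lintegral_ofReal φ.integrable_normed
        (ae_of_all _ φ.nonneg_normed), φ.integral_normed, ENNReal.ofReal_one]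
  have hball : ∀ᵐ z ∂μ.withDensity d, z ∈ Metric.ball (0 : G) φ.rOut := by
    refine (ae_withDensity_iff hd).2 (ae_of_all _ fun z hz => ?_)
    rw [← φ.support_normed_eq (μ := μ)]
    exact fun h0 => hz (ENNReal.ofReal_eq_zero.2 h0.le)
  have hmem : ∀ᵐ z ∂μ.withDensity d, w (x - z) ∈ s := by
    filter_upwards [hball] with z hz
    exact hws _ (by simpa [dist_eq_norm] using hz)
  have hcont : Continuous fun z => w (x - z) := by fun_prop
  have hint : Integrable (fun z => w (x - z)) (μ.withDensity d) := by
    obtain ⟨C, hC⟩ :=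
      (isCompact_closedBall (0 : G) φ.rOut).exists_bound_of_continuousOn hcont.continuousOn
    refine .of_bound hcont.aestronglyMeasurable C ?_
    filter_upwards [hball] with z hz using hC z (Metric.ball_subset_closedBall hz)
  have havg := hs.integral_mem hs' hmem hint
  rw [integral_withDensity_eq_integral_toReal_smul hd
    (ae_of_all _ fun _ => ENNReal.ofReal_lt_top)] at havg
  simpa only [convolution_lsmul, d, ENNReal.toReal_ofReal (φ.nonneg_normed _)] using havg

end Convex

variable {m : ℕ}

/-- The mollification `φ * g` of `g` by the normalised bump function `φ`. -/
noncomputable def mollify (φ : ContDiffBump (0 : Fin m → ℝ)) (g : (Fin m → ℝ) → ℝ) :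
    (Fin m → ℝ) → ℝ :=
  convolution (φ.normed volume) g (ContinuousLinearMap.lsmul ℝ ℝ) volume

lemma contDiff_mollify (φ : ContDiffBump (0 : Fin m → ℝ)) {g : (Fin m → ℝ) → ℝ}
    (hg : Continuous g) {k : ℕ∞} : ContDiff ℝ k (mollify φ g) :=
  φ.hasCompactSupport_normed.contDiff_convolution_left _ φ.contDiff_normed hg.locallyIntegrable

end Mollification

section MollifiedSubsolution

open MeasureTheory

variable {m : ℕ} {F : Set (Matrix (Fin m) (Fin m) ℝ)} {U N : Set (Fin m → ℝ)}
  {u : (Fin m → ℝ) → EReal} {g : (Fin m → ℝ) → ℝ} {f : Matrix (Fin m) (Fin m) ℝ →ₗ[ℝ] ℝ}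
  {p x : Fin m → ℝ} {r t : ℝ}

lemma contDiff_const_mul_dotProduct_self {k : WithTop ℕ∞} (s : ℝ) :
    ContDiff ℝ k fun y : Fin m → ℝ => s * (y ⬝ᵥ y) := by
  simpa using contDiff_const.mul (contDiff_dotProduct_self_sub (k := k) (0 : Fin m → ℝ))

lemma hessianMatrix_const_mul_dotProduct_self (s : ℝ) (y : Fin m → ℝ) :
    hessianMatrix (fun y => s * (y ⬝ᵥ y)) y = (s * 2) • 1 := by
  have h := hessianMatrix_const_mul (contDiff_dotProduct_self_sub (0 : Fin m → ℝ)).contDiffAt s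
    (x := y)
  rw [hessianMatrix_dotProduct_self_sub, smul_smul] at h
  simpa using h

/-- The comparison principle: `g(p + ·) - t|·|²/(2 f(1))` is a subsolution of `f(D²h) = 0`. -/
lemma IsTypeF.le_of_le_on_sphere (hu : IsTypeF F U u) (hf : 0 < f 1) (hF : ∀ B ∈ F, t ≤ f B)
    (hr : 0 ≤ r) (hNU : N ⊆ U) (hug : ∀ y ∈ N, u y = g y)
    (hN : ∀ y ∈ euclideanClosedBall 0 r, p + y ∈ N) {h : (Fin m → ℝ) → ℝ}
    (hh : ContDiff ℝ 2 h) (hfh : ∀ y, f (hessianMatrix h y) = 0) {M : ℝ}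
    (hM : ∀ y, y ⬝ᵥ y = r ^ 2 → g (p + y) - t / (2 * f 1) * (y ⬝ᵥ y) ≤ h y + M) :
    g p ≤ h 0 + M := by
  set q : (Fin m → ℝ) → ℝ := fun y => t / (2 * f 1) * (y ⬝ᵥ y)
  have hq : ContDiff ℝ 2 q := contDiff_const_mul_dotProduct_self _
  set w : (Fin m → ℝ) → ℝ := fun y => -1 * (h y + q y)
  have hw : ContDiff ℝ 2 w := contDiff_const.mul (hh.add hq)
  have hfw : ∀ y, f (hessianMatrix w y) = -t := fun y => by
    rw [hessianMatrix_const_mul (hh.add hq).contDiffAt,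
      hessianMatrix_add hh.contDiffAt hq.contDiffAt, hessianMatrix_const_mul_dotProduct_self,
      map_smul, map_add, hfh, map_smul, smul_eq_mul, smul_eq_mul]
    field
  have hv : ContDiff ℝ 2 fun y => w (y + -p) := hw.comp (contDiff_id.add contDiff_const)
  have hball : ∀ y ∈ euclideanClosedBall p r, y ∈ N := fun y hy => by
    simpa using hN (y - p) (by simpa [euclideanClosedBall] using hy)
  have hsub := hu.2.2 _ hv.contDiffOn (fun y _ => mem_dualSub_of_le hf hF
    (isSymm_hessianMatrix hv.contDiffAt) (by rw [hessianMatrix_comp_add_right, hfw]))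
    (AffineMap.const ℝ _ M) (euclideanClosedBall p r) (isCompact_euclideanClosedBall p hr)
    (fun y hy => hNU (hball y hy)) ?_ p (mem_euclideanClosedBall_self p r)
  · simp only [hug p (hball p (mem_euclideanClosedBall_self p r)), ← EReal.coe_add,
      EReal.coe_le_coe_iff, AffineMap.const_apply, add_neg_cancel] at hsub
    have hq0 : q 0 = 0 := by simp [q]
    linarith
  · intro y hy
    have hsphere := dotProduct_self_eq_of_mem_frontier hy
    have hle := hM (y - p) hsphere
    rw [add_sub_cancel] at hle
    simp only [hug y (hball y hsphere.le), ← EReal.coe_add, EReal.coe_le_coe_iff,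
      AffineMap.const_apply, ← sub_eq_add_neg]
    linarith

/-- The continuous functions on a ball whose value at the centre is at most that of the solution
of `f(D²h) = 0` with the same values on the sphere. Polynomial solutions with approximately the
same values are used, so that the set is visibly convex and closed. -/
def centerDominated (f : Matrix (Fin m) (Fin m) ℝ →ₗ[ℝ] ℝ) (r : ℝ) :
    Set C(euclideanClosedBall (0 : Fin m → ℝ) r, ℝ) :=
  {φ | ∀ ε > 0, ∃ h : MvPolynomial (Fin m) ℝ, hessianOperator f h = 0 ∧
    (∀ y : euclideanClosedBall 0 r, (y : Fin m → ℝ) ⬝ᵥ y = r ^ 2 →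
      |φ y - MvPolynomial.eval (y : Fin m → ℝ) h| ≤ ε) ∧
    φ ⟨0, mem_euclideanClosedBall_self 0 r⟩ ≤ MvPolynomial.eval 0 h + ε}

lemma convex_centerDominated (f : Matrix (Fin m) (Fin m) ℝ →ₗ[ℝ] ℝ) (r : ℝ) :
    Convex ℝ (centerDominated f r) := by
  intro φ hφ ψ hψ a b ha hb hab ε hε
  obtain ⟨h, hh, hφh, hφh0⟩ := hφ ε hε
  obtain ⟨k, hk, hψk, hψk0⟩ := hψ ε hε
  refine ⟨a • h + b • k, by simp [hh, hk], fun y hy => ?_, ?_⟩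
  · have hsum : a * ε + b * ε = ε := by rw [← add_mul, hab, one_mul]
    have hleft := mul_le_mul_of_nonneg_left (abs_le.1 (hφh y hy)).1 ha
    have hleft' := mul_le_mul_of_nonneg_left (abs_le.1 (hφh y hy)).2 ha
    have hright := mul_le_mul_of_nonneg_left (abs_le.1 (hψk y hy)).1 hb
    have hright' := mul_le_mul_of_nonneg_left (abs_le.1 (hψk y hy)).2 hb
    simp only [ContinuousMap.add_apply, ContinuousMap.smul_apply, smul_eq_mul, map_add,
      MvPolynomial.smul_eval]
    exact abs_le.2 ⟨by linarith, by linarith⟩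
  · simp only [ContinuousMap.add_apply, ContinuousMap.smul_apply, smul_eq_mul, map_add,
      MvPolynomial.smul_eval]
    calc _ ≤ a * (MvPolynomial.eval 0 h + ε) + b * (MvPolynomial.eval 0 k + ε) := by gcongr
      _ = _ := by linear_combination ε * hab

lemma isClosed_centerDominated (f : Matrix (Fin m) (Fin m) ℝ →ₗ[ℝ] ℝ) (hr : 0 ≤ r) :
    IsClosed (centerDominated f r) := by
  have := isCompact_iff_compactSpace.1 (isCompact_euclideanClosedBall (0 : Fin m → ℝ) hr)
  refine isClosed_of_closure_subset fun φ hφ ε hε => ?_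
  obtain ⟨ψ, hψ, hdist⟩ := Metric.mem_closure_iff.1 hφ (ε / 2) (half_pos hε)
  obtain ⟨h, hh, hψh, hψh0⟩ := hψ (ε / 2) (half_pos hε)
  have hφψ : ∀ y, |φ y - ψ y| ≤ ε / 2 := fun y =>
    ((ContinuousMap.dist_lt_iff (half_pos hε)).1 hdist y).le
  refine ⟨h, hh, fun y hy => ?_, ?_⟩
  · linarith [abs_sub_le (φ y) (ψ y) (MvPolynomial.eval (y : Fin m → ℝ) h), hψh y hy, hφψ y]
  · linarith [(abs_le.1 (hφψ ⟨0, mem_euclideanClosedBall_self 0 r⟩)).2]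

lemma IsTypeF.mem_centerDominated (hu : IsTypeF F U u) (hf : IsEllipticFunctional f)
    (hF : ∀ B ∈ F, t ≤ f B) (hr : 0 < r) (hNU : N ⊆ U) (hug : ∀ y ∈ N, u y = g y)
    (hN : ∀ y ∈ euclideanClosedBall 0 r, p + y ∈ N) (hg : Continuous g)
    {φ : C(euclideanClosedBall (0 : Fin m → ℝ) r, ℝ)}
    (hφ : ∀ y, φ y = g (p + y) - t / (2 * f 1) * ((y : Fin m → ℝ) ⬝ᵥ y)) :
    φ ∈ centerDominated f r := by
  intro ε hε
  have hcont : Continuous fun y => g (p + y) - t / (2 * f 1) * (y ⬝ᵥ y) := by fun_prop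
  obtain ⟨q, hq⟩ :=
    exists_abs_eval_sub_lt (isCompact_euclideanClosedBall (0 : Fin m → ℝ) hr.le) hcont hε
  obtain ⟨h, hh, hhq⟩ := hf.exists_eval_eq_on_sphere 0 hr q
  simp only [sub_zero] at hhq
  have hsphere : ∀ y : euclideanClosedBall 0 r, (y : Fin m → ℝ) ⬝ᵥ y = r ^ 2 →
      |φ y - MvPolynomial.eval (y : Fin m → ℝ) h| ≤ ε := fun y hy => by
    rw [hhq _ hy, hφ, abs_sub_comm]
    exact (hq y y.2).le
  have hle := hu.le_of_le_on_sphere hf.map_one_pos hF hr.le hNU hug hN (contDiff_eval h)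
    (fun y => by rw [← eval_hessianOperator, hh, map_zero]) (M := ε) fun y hy => by
      have habs := hsphere ⟨y, by simp [euclideanClosedBall, hy]⟩ hy
      rw [hφ] at habs
      linarith [(abs_le.1 habs).2]
  exact ⟨h, hh, hsphere, by simpa [hφ] using hle⟩

lemma IsTypeF.exists_mem_centerDominated_mollify (hu : IsTypeF F U u) (hf : IsEllipticFunctional f)
    (hF : ∀ B ∈ F, t ≤ f B) (hr : 0 < r) (hNU : N ⊆ U) (hug : ∀ y ∈ N, u y = g y)
    (hg : Continuous g) (φ : ContDiffBump (0 : Fin m → ℝ))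
    (hN : Metric.closedBall x (φ.rOut + r) ⊆ N) :
    ∃ ψ ∈ centerDominated f r, ∀ y,
      ψ y = mollify φ g (x + y) - t / (2 * f 1) * ((y : Fin m → ℝ) ⬝ᵥ y) := by
  set B : Set (Fin m → ℝ) := euclideanClosedBall 0 r
  have : CompactSpace B := isCompact_iff_compactSpace.1 (isCompact_euclideanClosedBall 0 hr.le)
  have hcont : Continuous fun z : (Fin m → ℝ) × B =>
      g (z.1 + z.2) - t / (2 * f 1) * ((z.2 : Fin m → ℝ) ⬝ᵥ z.2) := by fun_prop
  set w : C(Fin m → ℝ, C(B, ℝ)) := (ContinuousMap.mk _ hcont).curry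
  have hw : ∀ p y, w p y = g (p + y) - t / (2 * f 1) * ((y : Fin m → ℝ) ⬝ᵥ y) := fun _ _ => rfl
  refine ⟨_, convolution_normed_mem (μ := volume) φ w.continuous (convex_centerDominated f r)
    (isClosed_centerDominated f hr.le) (x := x) fun p hp => ?_, fun y => ?_⟩
  · refine hu.mem_centerDominated hf hF hr hNU hug (fun y hy => hN ?_) hg (hw p)
    have hy' := mem_closedBall_zero_iff.1 (euclideanClosedBall_subset_closedBall 0 hr.le hy)
    rw [mem_closedBall_iff_norm, add_sub_right_comm]
    exact (norm_add_le _ _).trans (add_le_add (mem_ball_iff_norm.1 hp).le hy')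
  · have hint : ConvolutionExistsAt (φ.normed volume) w x (ContinuousLinearMap.lsmul ℝ ℝ) volume :=
      φ.hasCompactSupport_normed.convolutionExists_left _ φ.continuous_normed
        w.continuous.locallyIntegrable x
    have hint' : Integrable fun z => φ.normed volume z • g (x + y - z) :=
      φ.hasCompactSupport_normed.convolutionExists_left (ContinuousLinearMap.lsmul ℝ ℝ)
        φ.continuous_normed
        hg.locallyIntegrable (x + y)
    calc _ = ∫ z, φ.normed volume z • w (x - z) y :=
          ((ContinuousMap.evalCLM ℝ y).integral_comp_comm hint).symm
      _ = ∫ z, φ.normed volume z • g (x + y - z) -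
            φ.normed volume z * (t / (2 * f 1) * ((y : Fin m → ℝ) ⬝ᵥ y)) := by
          simp only [hw, smul_eq_mul, mul_sub, sub_add_eq_add_sub]
      _ = _ := by
          rw [integral_sub hint' (φ.integrable_normed.mul_const _), integral_mul_const,
            φ.integral_normed, one_mul, mollify, convolution_lsmul]

end MollifiedSubsolution

section HessianMollify

variable {m : ℕ} {F : Set (Matrix (Fin m) (Fin m) ℝ)} {U N : Set (Fin m → ℝ)}
  {u : (Fin m → ℝ) → EReal} {g : (Fin m → ℝ) → ℝ} {f : Matrix (Fin m) (Fin m) ℝ →ₗ[ℝ] ℝ}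
  {x : Fin m → ℝ} {ρ t : ℝ}

lemma IsEllipticFunctional.notMem_centerDominated (hf : IsEllipticFunctional f) {r : ℝ}
    (hr : 0 < r) {G : (Fin m → ℝ) → ℝ} (hG : ContDiff ℝ 2 G)
    (hfG : ∀ y ∈ euclideanClosedBall 0 r, f (hessianMatrix G y) ≤ 0) {η : ℝ} (hη : 0 < η)
    {ψ : C(euclideanClosedBall (0 : Fin m → ℝ) r, ℝ)}
    (hψ : ∀ y, ψ y = G y - η * ((y : Fin m → ℝ) ⬝ᵥ y)) : ψ ∉ centerDominated f r := by
  intro hmem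
  have hpos : 0 < η * r ^ 2 := by positivity
  obtain ⟨h, hh, hsphere, hcentre⟩ := hmem (η * r ^ 2 / 4) (by positivity)
  have hGneg : ContDiff ℝ 2 fun y => -1 * G y := contDiff_const.mul hG
  have hB := isCompact_euclideanClosedBall (0 : Fin m → ℝ) hr.le
  have hle := hf.le_of_frontier_le isOpen_univ hB (Set.subset_univ _)
    ((contDiff_eval h).add hGneg).contDiffOn
    (fun y hy => by
      rw [hessianMatrix_add (contDiff_eval h).contDiffAt hGneg.contDiffAt,
        hessianMatrix_const_mul hG.contDiffAt, map_add, map_smul, ← eval_hessianOperator, hh,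
        map_zero, zero_add, smul_eq_mul]
      linarith [hfG y hy])
    (M := η * r ^ 2 / 4 - η * r ^ 2)
    (fun y hy => by
      have hy' := dotProduct_self_eq_of_mem_frontier hy
      rw [sub_zero] at hy'
      have hle := (abs_le.1 (hsphere ⟨y, hB.isClosed.frontier_subset hy⟩ hy')).1
      simp only [hψ, hy'] at hle
      linarith)
    (mem_euclideanClosedBall_self 0 r)
  rw [hψ, dotProduct_zero] at hcentre
  linarith

/-- If `f (D²(φ * g)(x)) < t`, then a quadratic correction of `φ * g` would be a strict
supersolution near `x` and still be dominated at `x` by its Dirichlet solutions. -/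
lemma IsTypeF.le_map_hessianMatrix_mollify (hu : IsTypeF F U u) (hf : IsEllipticFunctional f)
    (hF : ∀ B ∈ F, t ≤ f B) (hρ : 0 < ρ) (hNU : N ⊆ U) (hug : ∀ y ∈ N, u y = g y)
    (hg : Continuous g) (φ : ContDiffBump (0 : Fin m → ℝ))
    (hN : Metric.closedBall x (φ.rOut + ρ) ⊆ N) :
    t ≤ f (hessianMatrix (mollify φ g) x) := by
  have hf1 := hf.map_one_pos
  by_contra! hlt
  set s := f (hessianMatrix (mollify φ g) x)
  set η := (t - s) / (4 * f 1) with hη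
  have hη0 : 0 < η := div_pos (sub_pos.2 hlt) (by positivity)
  set κ := η - t / (2 * f 1) with hκ
  have hW : ContDiff ℝ 2 fun y => mollify φ g (y + x) :=
    (contDiff_mollify φ hg).comp (contDiff_id.add contDiff_const)
  have hQ : ContDiff ℝ 2 fun y : Fin m → ℝ => κ * (y ⬝ᵥ y) := contDiff_const_mul_dotProduct_self κ
  set G : (Fin m → ℝ) → ℝ := fun y => mollify φ g (y + x) + κ * (y ⬝ᵥ y) with hG_def
  have hG : ContDiff ℝ 2 G := hW.add hQ
  have hG0 : f (hessianMatrix G 0) < 0 := by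
    calc f (hessianMatrix G 0) = s + κ * 2 * f 1 := by
          rw [hessianMatrix_add hW.contDiffAt hQ.contDiffAt, hessianMatrix_comp_add_right,
            hessianMatrix_const_mul_dotProduct_self, zero_add, map_add, map_smul, smul_eq_mul]
      _ = (s - t) / 2 := by rw [hκ, hη]; field
      _ < 0 := by linarith
  have hfG : Continuous fun y => f (hessianMatrix G y) :=
    f.continuous_of_finiteDimensional.comp (continuous_hessianMatrix hG)
  obtain ⟨δ, hδ, hneg⟩ := Metric.eventually_nhds_iff.1 (hfG.tendsto 0 |>.eventually_lt_const hG0)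
  have hr : 0 < min ρ (δ / 2) := lt_min hρ (half_pos hδ)
  obtain ⟨ψ, hψ, hψG⟩ := hu.exists_mem_centerDominated_mollify hf hF hr hNU hug hg φ (x := x)
    ((Metric.closedBall_subset_closedBall (by gcongr; exact min_le_left _ _)).trans hN)
  refine hf.notMem_centerDominated hr hG (fun y hy => (hneg ?_).le) hη0 (fun y => ?_) hψ
  · have hy' := euclideanClosedBall_subset_closedBall 0 hr.le hy
    exact (Metric.mem_closedBall.1 hy').trans_lt ((min_le_right _ _).trans_lt (half_lt_self hδ))
  · rw [hψG, add_comm x, hG_def]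
    linarith

lemma IsConvexSubequation.hessianMatrix_mollify_mem (hF : IsConvexSubequation F)
    (hu : IsTypeF F U u) (hρ : 0 < ρ) (hNU : N ⊆ U) (hug : ∀ y ∈ N, u y = g y)
    (hg : Continuous g) (φ : ContDiffBump (0 : Fin m → ℝ))
    (hN : Metric.closedBall x (φ.rOut + ρ) ⊆ N) : hessianMatrix (mollify φ g) x ∈ F := by
  by_contra hnot
  obtain ⟨f, t, hf, hFt, hlt⟩ :=
    hF.exists_isEllipticFunctional_lt (isSymm_hessianMatrix (contDiff_mollify φ hg).contDiffAt) hnot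
  exact hlt.not_ge (hu.le_map_hessianMatrix_mollify hf hFt hρ hNU hug hg φ hN)

end HessianMollify

/-! ### Convexity along segments -/

section SegmentConvexity

lemma exists_le_add_mul_of_upperSemicontinuousOn {X : Type*} [TopologicalSpace X] {K : Set X}
    (hK : IsCompact K) {w : X → EReal} (hw : UpperSemicontinuousOn w K)
    (hw' : ∀ y ∈ K, w y ≠ ⊤) {ℓ Q : X → ℝ} (hℓ : ContinuousOn ℓ K) (hQ : ContinuousOn Q K)
    (hQ0 : ∀ y ∈ K, 0 ≤ Q y) (hwℓ : ∀ y ∈ K, Q y = 0 → w y < ℓ y) :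
    ∃ C : ℝ, ∀ y ∈ K, w y ≤ (ℓ y + C * Q y : ℝ) := by
  suffices ∃ C : ℝ, ∀ y ∈ K, y ∈ K → w y ≤ (ℓ y + C * Q y : ℝ) by simpa using this
  refine hK.induction_on (p := fun s => ∃ C : ℝ, ∀ y ∈ s, y ∈ K → w y ≤ (ℓ y + C * Q y : ℝ))
    ⟨0, by simp⟩ (fun s s' hss' ⟨C, hC⟩ => ⟨C, fun y hy => hC y (hss' hy)⟩) ?_ ?_
  · rintro s s' ⟨C, hC⟩ ⟨C', hC'⟩
    refine ⟨max C C', fun y hy hyK => ?_⟩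
    have hQy := hQ0 y hyK
    rcases hy with hy | hy
    · refine (hC y hy hyK).trans (EReal.coe_le_coe_iff.2 ?_)
      gcongr
      exact le_max_left _ _
    · refine (hC' y hy hyK).trans (EReal.coe_le_coe_iff.2 ?_)
      gcongr
      exact le_max_right _ _
  · intro y hy
    obtain ⟨C, hC⟩ : ∃ C : ℝ, w y < (ℓ y + C * Q y : ℝ) := by
      rcases eq_or_ne (Q y) 0 with h0 | h0
      · exact ⟨0, by simpa using hwℓ y hy h0⟩
      · obtain ⟨M, hM, -⟩ := EReal.lt_iff_exists_real_btwn.1 (hw' y hy).lt_top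
        exact ⟨(M - ℓ y) / Q y, by rwa [div_mul_cancel₀ _ h0, add_sub_cancel]⟩
    obtain ⟨c, hwc, hcC⟩ := EReal.lt_iff_exists_real_btwn.1 hC
    have hcont : ContinuousWithinAt (fun y => ℓ y + C * Q y) K y :=
      (hℓ.add (continuousOn_const.mul hQ)) y hy
    refine ⟨_, inter_mem (hw y hy c hwc)
      (hcont.eventually_const_lt (EReal.coe_lt_coe_iff.1 hcC)), C, fun z hz _ => ?_⟩
    exact hz.1.le.trans (EReal.coe_le_coe_iff.2 hz.2.le)

variable {m : ℕ} {F : Set (Matrix (Fin m) (Fin m) ℝ)} {U : Set (Fin m → ℝ)}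
  {u : (Fin m → ℝ) → EReal} {a b ξ : Fin m → ℝ}

lemma exists_mulVec_eq_zero_iff (hξ : ξ ≠ 0) :
    ∃ T : Matrix (Fin m) (Fin m) ℝ, ∀ x, T *ᵥ x = 0 ↔ ∃ s : ℝ, x = s • ξ := by
  have hT : ∀ x, ((ξ ⬝ᵥ ξ) • (1 : Matrix (Fin m) (Fin m) ℝ) - vecMulVec ξ ξ) *ᵥ x =
      (ξ ⬝ᵥ ξ) • x - (ξ ⬝ᵥ x) • ξ := fun x => by
    rw [sub_mulVec, smul_mulVec, one_mulVec, vecMulVec_mulVec, op_smul_eq_smul]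
  refine ⟨(ξ ⬝ᵥ ξ) • 1 - vecMulVec ξ ξ, fun x => ?_⟩
  rw [hT, sub_eq_zero]
  constructor
  · intro hx
    refine ⟨(ξ ⬝ᵥ ξ)⁻¹ * (ξ ⬝ᵥ x), ?_⟩
    rw [mul_smul, ← hx, inv_smul_smul₀ (dotProduct_self_eq_zero.not.2 hξ)]
  · rintro ⟨s, rfl⟩
    rw [dotProduct_smul, smul_smul, smul_eq_mul, mul_comm]

lemma mem_dualSub_of_dotProduct_mulVec_nonneg (hF : ∀ B ∈ F, B.PosSemidef) (hξ : ξ ≠ 0)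
    {H : Matrix (Fin m) (Fin m) ℝ} (hH : H.IsSymm) (hHξ : 0 ≤ ξ ⬝ᵥ H *ᵥ ξ) : H ∈ dualSub F := by
  let f : Matrix (Fin m) (Fin m) ℝ →ₗ[ℝ] ℝ :=
    { toFun := fun A => ξ ⬝ᵥ A *ᵥ ξ
      map_add' := fun A B => by rw [add_mulVec, dotProduct_add]
      map_smul' := fun s A => by rw [smul_mulVec, dotProduct_smul, RingHom.id_apply] }
  have hf : 0 < f 1 := by
    change 0 < ξ ⬝ᵥ 1 *ᵥ ξ
    rw [one_mulVec]
    exact (dotProduct_self_star_nonneg ξ).lt_of_ne' (dotProduct_self_eq_zero.not.2 hξ)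
  refine mem_dualSub_of_le hf (t := 0) (fun B hB => ?_) hH (by rwa [neg_zero])
  exact (posSemidef_iff_isSymm_and.1 (hF B hB)).2 ξ

/-- A compact neighbourhood of the segment `[a, b]` truncated at the hyperplanes through its end
points. -/
lemma exists_isCompact_segment_subset (hab : a ≠ b) (hU : IsOpen U) (hseg : segment ℝ a b ⊆ U) :
    ∃ (K : Set (Fin m → ℝ)) (L : (Fin m → ℝ) →ᵃ[ℝ] ℝ), IsCompact K ∧ segment ℝ a b ⊆ K ∧ K ⊆ U ∧
      (∀ s : ℝ, L (AffineMap.lineMap a b s) = s) ∧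
      ∀ s : ℝ, AffineMap.lineMap a b s ∈ frontier K → s = 0 ∨ s = 1 := by
  obtain ⟨e, he⟩ := SeparatingDual.exists_eq_one (R := ℝ) (sub_ne_zero.2 hab.symm)
  set L : (Fin m → ℝ) →ᵃ[ℝ] ℝ :=
    e.toLinearMap.toAffineMap.comp (AffineMap.id ℝ _ - AffineMap.const ℝ _ a)
  have hL : ∀ s : ℝ, L (AffineMap.lineMap a b s) = s := fun s => by
    simp [L, AffineMap.lineMap_apply, he]
  have hLcont : Continuous L := L.continuous_of_finiteDimensional
  have hcompact : IsCompact (segment ℝ a b) := by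
    rw [segment_eq_image_lineMap]
    exact isCompact_Icc.image AffineMap.lineMap_continuous
  have hmem : ∀ s ∈ Set.Icc (0 : ℝ) 1, AffineMap.lineMap a b s ∈ segment ℝ a b := fun s hs => by
    rw [segment_eq_image_lineMap]
    exact ⟨s, hs, rfl⟩
  obtain ⟨N, hN, hsegN, hNU⟩ := exists_compact_between hcompact hU hseg
  have hK : IsCompact (N ∩ L ⁻¹' Set.Icc 0 1) := hN.inter_right (isClosed_Icc.preimage hLcont)
  refine ⟨_, L, hK, fun y hy => ⟨interior_subset (hsegN hy), ?_⟩,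
    Set.inter_subset_left.trans hNU, hL, fun s hs => ?_⟩
  · rw [segment_eq_image_lineMap] at hy
    obtain ⟨s, hs, rfl⟩ := hy
    rwa [Set.mem_preimage, hL]
  · have hsmem := (hK.isClosed.frontier_subset hs).2
    rw [Set.mem_preimage, hL] at hsmem
    by_contra! hne
    have hs' : s ∈ Set.Ioo (0 : ℝ) 1 := ⟨hsmem.1.lt_of_ne' hne.1, hsmem.2.lt_of_ne hne.2⟩
    refine hs.2 (mem_interior_iff_mem_nhds.2 (inter_mem
      (mem_interior_iff_mem_nhds.1 (hsegN (hmem s hsmem))) (hLcont.continuousAt ?_)))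
    rw [hL]
    exact Icc_mem_nhds hs'.1 hs'.2

lemma exists_contDiff_eq_zero_iff_lineMap (hab : a ≠ b) :
    ∃ Q : (Fin m → ℝ) → ℝ, ContDiff ℝ 2 Q ∧ (∀ y, 0 ≤ Q y) ∧
      (∀ y, Q y = 0 ↔ ∃ s : ℝ, y = AffineMap.lineMap a b s) ∧
      ∀ y, (b - a) ⬝ᵥ hessianMatrix Q y *ᵥ (b - a) = 0 := by
  obtain ⟨T, hT⟩ := exists_mulVec_eq_zero_iff (sub_ne_zero.2 hab.symm)
  have hQ : ∀ y, (y - a) ⬝ᵥ (Tᵀ * T) *ᵥ (y - a) = T *ᵥ (y - a) ⬝ᵥ T *ᵥ (y - a) := fun y => by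
    rw [← mulVec_mulVec, dotProduct_mulVec _ Tᵀ, vecMul_transpose]
  refine ⟨fun y => (y - a) ⬝ᵥ (Tᵀ * T) *ᵥ (y - a), contDiff_dotProduct_mulVec_sub _ a,
    fun y => (dotProduct_self_star_nonneg _).trans_eq (hQ y).symm, fun y => ?_, fun y => ?_⟩
  · simp only [hQ, dotProduct_self_eq_zero, hT, AffineMap.lineMap_apply_module', sub_eq_iff_eq_add]
  · have hTξ : T *ᵥ (b - a) = 0 := (hT _).2 ⟨1, (one_smul ℝ _).symm⟩
    rw [hessianMatrix_dotProduct_mulVec_sub, transpose_mul, transpose_transpose, add_mulVec,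
      ← mulVec_mulVec, hTξ, mulVec_zero, add_zero, dotProduct_zero]

/-- Subtracting a large multiple of the squared distance to the line puts `u` below the affine
interpolation on the whole frontier of a neighbourhood of the segment. -/
lemma IsTypeF.le_lineMap_of_ne (hu : IsTypeF F U u) (hF : ∀ B ∈ F, B.PosSemidef) (hU : IsOpen U)
    (hab : a ≠ b) (hseg : segment ℝ a b ⊆ U) {α β : ℝ} (hα : u a < α) (hβ : u b < β) {s : ℝ}
    (hs : s ∈ Set.Icc (0 : ℝ) 1) :
    u (AffineMap.lineMap a b s) ≤ (AffineMap.lineMap α β s : ℝ) := by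
  obtain ⟨K, L, hK, hsegK, hKU, hL, hKab⟩ := exists_isCompact_segment_subset hab hU hseg
  have hfrK : frontier K ⊆ K := hK.isClosed.frontier_subset
  obtain ⟨Q, hQ, hQ0, hQline, hQHess⟩ := exists_contDiff_eq_zero_iff_lineMap hab
  set ℓ : (Fin m → ℝ) →ᵃ[ℝ] ℝ := (AffineMap.lineMap α β).comp L
  have hℓ : ∀ s : ℝ, ℓ (AffineMap.lineMap a b s) = AffineMap.lineMap α β s := fun s =>
    congrArg (AffineMap.lineMap α β) (hL s)
  obtain ⟨C, hC⟩ : ∃ C : ℝ, ∀ y ∈ frontier K, u y ≤ (ℓ y + C * Q y : ℝ) := by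
    refine exists_le_add_mul_of_upperSemicontinuousOn (hK.of_isClosed_subset isClosed_frontier hfrK)
      (hu.2.1.mono (hfrK.trans hKU)) (fun y hy => hu.1 y (hKU (hfrK hy)))
      ℓ.continuous_of_finiteDimensional.continuousOn hQ.continuous.continuousOn
      (fun y _ => hQ0 y) fun y hy hQy => ?_
    obtain ⟨s, rfl⟩ := (hQline y).1 hQy
    rw [hℓ]
    rcases hKab s hy with rfl | rfl
    · simpa using hα
    · simpa using hβ
  have hv : ContDiff ℝ 2 fun y => -C * Q y := contDiff_const.mul hQ
  have hvF : ∀ y, hessianMatrix (fun y => -C * Q y) y ∈ dualSub F := fun y => by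
    refine mem_dualSub_of_dotProduct_mulVec_nonneg hF (sub_ne_zero.2 hab.symm)
      (isSymm_hessianMatrix hv.contDiffAt) (le_of_eq ?_)
    rw [hessianMatrix_const_mul hQ.contDiffAt, smul_mulVec, dotProduct_smul, hQHess, smul_zero]
  have hle := hu.2.2 _ hv.contDiffOn (fun y _ => hvF y) ℓ K hK hKU (fun y hy => ?_)
    (AffineMap.lineMap a b s) (hsegK (segment_eq_image_lineMap ℝ a b ▸ ⟨s, hs, rfl⟩))
  · simpa only [(hQline _).2 ⟨s, rfl⟩, hℓ, mul_zero, EReal.coe_zero, add_zero] using hle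
  · calc u y + (-C * Q y : ℝ) ≤ (ℓ y + C * Q y : ℝ) + (-C * Q y : ℝ) := by gcongr; exact hC y hy
      _ = ℓ y := by rw [← EReal.coe_add]; ring_nf

lemma IsTypeF.le_lineMap (hu : IsTypeF F U u) (hF : ∀ B ∈ F, B.PosSemidef) (hU : IsOpen U)
    (hseg : segment ℝ a b ⊆ U) {α β : ℝ} (hα : u a < α) (hβ : u b < β) {s : ℝ}
    (hs : s ∈ Set.Icc (0 : ℝ) 1) :
    u (AffineMap.lineMap a b s) ≤ (AffineMap.lineMap α β s : ℝ) := by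
  rcases eq_or_ne a b with rfl | hab
  · have hmin : min α β ≤ AffineMap.lineMap α β s :=
      (convex_Ici (𝕜 := ℝ) (min α β)).lineMap_mem (min_le_left α β) (min_le_right α β) hs
    rw [AffineMap.lineMap_same_apply]
    refine le_trans ?_ (EReal.coe_le_coe_iff.2 hmin)
    rcases min_choice α β with h | h <;> rw [h]
    exacts [hα.le, hβ.le]
  · exact hu.le_lineMap_of_ne hF hU hab hseg hα hβ hs

end SegmentConvexity

section LocalConvexity

variable {m : ℕ} {F : Set (Matrix (Fin m) (Fin m) ℝ)} {U V : Set (Fin m → ℝ)}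
  {u : (Fin m → ℝ) → EReal}

lemma IsTypeF.eq_bot_of_convex (hu : IsTypeF F U u) (hF : ∀ B ∈ F, B.PosSemidef) (hU : IsOpen U)
    (hV : Convex ℝ V) (hVo : IsOpen V) (hVU : V ⊆ U) {a x : Fin m → ℝ} (ha : a ∈ V) (hx : x ∈ V)
    (hbot : u a = ⊥) : u x = ⊥ := by
  have hline : Tendsto (AffineMap.lineMap a x) (nhdsWithin (1 : ℝ) (Set.Ioi 1)) (nhds x) := by
    have hcont : Continuous (AffineMap.lineMap (k := ℝ) a x) := AffineMap.lineMap_continuous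
    simpa using (hcont.tendsto 1).mono_left nhdsWithin_le_nhds
  obtain ⟨s, hsV, hs⟩ := ((hline.eventually (hVo.mem_nhds hx)).and self_mem_nhdsWithin).exists
  have hxs : AffineMap.lineMap a (AffineMap.lineMap a x s) s⁻¹ = x := by
    rw [AffineMap.lineMap_lineMap_right, inv_mul_cancel₀ (by linarith), AffineMap.lineMap_apply_one]
  obtain ⟨β, hβ, -⟩ := EReal.lt_iff_exists_real_btwn.1 (hu.1 _ (hVU hsV)).lt_top
  refine (EReal.eq_bot_iff_forall_lt _).2 fun r => ?_
  have hle := hu.le_lineMap hF hU ((hV.segment_subset ha hsV).trans hVU)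
    (α := (r - 1 - s⁻¹ * β) / (1 - s⁻¹)) (hbot ▸ EReal.bot_lt_coe _) hβ (s := s⁻¹)
    ⟨by positivity, inv_le_one_of_one_le₀ hs.le⟩
  have hr : AffineMap.lineMap ((r - 1 - s⁻¹ * β) / (1 - s⁻¹)) β s⁻¹ = r - 1 := by
    have hs' : s - 1 ≠ 0 := by linarith
    rw [AffineMap.lineMap_apply_module, smul_eq_mul, smul_eq_mul]
    field
  rw [hxs, hr] at hle
  exact hle.trans_lt (EReal.coe_lt_coe_iff.2 (by linarith))

lemma IsTypeF.exists_ball_eq_bot_iff (hu : IsTypeF F U u) (hF : ∀ B ∈ F, B.PosSemidef)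
    (hU : IsOpen U) {x : Fin m → ℝ} (hx : x ∈ U) :
    ∃ δ > 0, Metric.ball x δ ⊆ U ∧ ∀ y ∈ Metric.ball x δ, (u y = ⊥ ↔ u x = ⊥) := by
  obtain ⟨δ, hδ, hball⟩ := Metric.isOpen_iff.1 hU x hx
  have hprop := fun {y z} => hu.eq_bot_of_convex hF hU (convex_ball x δ) Metric.isOpen_ball hball
    (a := y) (x := z)
  exact ⟨δ, hδ, hball, fun y hy =>
    ⟨hprop hy (Metric.mem_ball_self hδ), hprop (Metric.mem_ball_self hδ) hy⟩⟩

lemma IsTypeF.isOpen_eq_bot (hu : IsTypeF F U u) (hF : ∀ B ∈ F, B.PosSemidef) (hU : IsOpen U) :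
    IsOpen {x | x ∈ U ∧ u x = ⊥} := Metric.isOpen_iff.2 fun _ ⟨hx, hux⟩ => by
  obtain ⟨δ, hδ, hδU, hiff⟩ := hu.exists_ball_eq_bot_iff hF hU hx
  exact ⟨δ, hδ, fun y hy => ⟨hδU hy, (hiff y hy).2 hux⟩⟩

lemma IsTypeF.isOpen_ne_bot (hu : IsTypeF F U u) (hF : ∀ B ∈ F, B.PosSemidef) (hU : IsOpen U) :
    IsOpen {x | x ∈ U ∧ u x ≠ ⊥} := Metric.isOpen_iff.2 fun _ ⟨hx, hux⟩ => by
  obtain ⟨δ, hδ, hδU, hiff⟩ := hu.exists_ball_eq_bot_iff hF hU hx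
  exact ⟨δ, hδ, fun y hy => ⟨hδU hy, fun h => hux ((hiff y hy).1 h)⟩⟩

lemma IsTypeF.convexOn_toReal (hu : IsTypeF F U u) (hF : ∀ B ∈ F, B.PosSemidef) (hU : IsOpen U)
    (hV : Convex ℝ V) (hVU : V ⊆ U) (hbot : ∀ x ∈ V, u x ≠ ⊥) :
    ConvexOn ℝ V fun y => (u y).toReal := by
  have hcoe : ∀ x ∈ V, u x = (u x).toReal := fun x hx =>
    (EReal.coe_toReal (hu.1 x (hVU hx)) (hbot x hx)).symm
  refine ⟨hV, fun y hy z hz a b ha hb hab => le_of_forall_pos_le_add fun ε hε => ?_⟩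
  have hlt : ∀ x ∈ V, u x < ((u x).toReal + ε : ℝ) := fun x hx => by
    rw [hcoe x hx, EReal.coe_lt_coe_iff, EReal.toReal_coe]
    linarith
  have hle := hu.le_lineMap hF hU ((hV.segment_subset hy hz).trans hVU) (hlt y hy) (hlt z hz)
    (s := b) ⟨hb, by linarith⟩
  rw [AffineMap.lineMap_apply_module, AffineMap.lineMap_apply_module, ← eq_sub_of_add_eq hab,
    hcoe _ (hV hy hz ha hb hab), EReal.coe_le_coe_iff, smul_eq_mul, smul_eq_mul] at hle
  refine hle.trans_eq ?_
  simp only [smul_eq_mul]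
  linear_combination ε * hab

lemma IsTypeF.continuousOn_toReal (hu : IsTypeF F U u) (hF : ∀ B ∈ F, B.PosSemidef)
    (hU : IsOpen U) : ContinuousOn (fun y => (u y).toReal) {x | x ∈ U ∧ u x ≠ ⊥} := by
  intro x hx
  obtain ⟨δ, hδ, hball⟩ := Metric.isOpen_iff.1 (hu.isOpen_ne_bot hF hU) x hx
  have hconv := hu.convexOn_toReal hF hU (convex_ball x δ) (fun y hy => (hball hy).1)
    fun y hy => (hball hy).2
  exact ((hconv.continuousOn Metric.isOpen_ball).continuousAt
    (Metric.ball_mem_nhds x hδ)).continuousWithinAt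

end LocalConvexity

/-! ### Smooth approximation from above -/

section SmoothApproximation

variable {m : ℕ} {F : Set (Matrix (Fin m) (Fin m) ℝ)} {U V W K N : Set (Fin m → ℝ)}
  {u : (Fin m → ℝ) → EReal} {v w : ℕ → (Fin m → ℝ) → ℝ}

/-- `v` is a strictly decreasing sequence of smooth functions on `V` that converges pointwise to
`u` and whose terms satisfy the subequation `F` classically, that is, through their Hessians. -/
structure IsSmoothApproximation (F : Set (Matrix (Fin m) (Fin m) ℝ)) (V : Set (Fin m → ℝ))
    (u : (Fin m → ℝ) → EReal) (v : ℕ → (Fin m → ℝ) → ℝ) : Prop where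
  contDiffOn : ∀ k, ContDiffOn ℝ (⊤ : ℕ∞) (v k) V
  hessianMatrix_mem : ∀ k, ∀ y ∈ V, hessianMatrix (v k) y ∈ F
  lt : ∀ k, ∀ y ∈ V, v (k + 1) y < v k y
  tendsto : ∀ y ∈ V, Tendsto (fun k => (v k y : EReal)) atTop (nhds (u y))

lemma IsSmoothApproximation.mono (hv : IsSmoothApproximation F V u v) (hW : W ⊆ V) :
    IsSmoothApproximation F W u v where
  contDiffOn k := (hv.contDiffOn k).mono hW
  hessianMatrix_mem k y hy := hv.hessianMatrix_mem k y (hW hy)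
  lt k y hy := hv.lt k y (hW hy)
  tendsto y hy := hv.tendsto y (hW hy)

lemma IsSmoothApproximation.of_eqOn (hv : IsSmoothApproximation F V u v) (hV : IsOpen V)
    (h : ∀ k, Set.EqOn (w k) (v k) V) : IsSmoothApproximation F V u w where
  contDiffOn k := (hv.contDiffOn k).congr (h k)
  hessianMatrix_mem k y hy := by
    rw [hessianMatrix_congr ((h k).eventuallyEq_of_mem (hV.mem_nhds hy))]
    exact hv.hessianMatrix_mem k y hy
  lt k y hy := by simpa only [h _ hy] using hv.lt k y hy
  tendsto y hy := by simpa only [h _ hy] using hv.tendsto y hy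

lemma IsSmoothApproximation.union (hv : IsSmoothApproximation F V u v)
    (hw : IsSmoothApproximation F W u v) (hV : IsOpen V) (hW : IsOpen W) :
    IsSmoothApproximation F (V ∪ W) u v where
  contDiffOn k := (hv.contDiffOn k).union_of_isOpen (hw.contDiffOn k) hV hW
  hessianMatrix_mem k y := Or.rec (hv.hessianMatrix_mem k y) (hw.hessianMatrix_mem k y)
  lt k y := Or.rec (hv.lt k y) (hw.lt k y)
  tendsto y := Or.rec (hv.tendsto y) (hw.tendsto y)

lemma IsConvexSubequation.exists_isSmoothApproximation_of_eq_bot (hF : IsConvexSubequation F)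
    (hu : ∀ y ∈ V, u y = ⊥) : ∃ v, IsSmoothApproximation F V u v := by
  obtain ⟨A, hA⟩ := hF.nonempty
  have hApos := hF.posSemidef hA
  set q : (Fin m → ℝ) → ℝ := fun y => (y - 0) ⬝ᵥ A *ᵥ (y - 0) with hq_def
  have hq {k : WithTop ℕ∞} : ContDiff ℝ k q := contDiff_dotProduct_mulVec_sub A 0
  refine ⟨fun k y => q y + -(k : ℝ), fun k => (hq.add contDiff_const).contDiffOn,
    fun k y _ => ?_, fun k y _ => ?_, fun y hy => ?_⟩
  · rw [hessianMatrix_add_const hq.contDiffAt, hq_def, hessianMatrix_dotProduct_mulVec_sub,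
      isSymm_of_posSemidef hApos]
    exact hF.add_mem hA hApos
  · push_cast
    linarith
  · rw [hu y hy, EReal.tendsto_nhds_bot_iff_real]
    have hlim : Tendsto (fun k : ℕ => q y + -(k : ℝ)) atTop atBot :=
      tendsto_atBot_add_const_left _ _ (tendsto_neg_atTop_atBot.comp tendsto_natCast_atTop_atTop)
    exact fun r => (hlim.eventually_lt_atBot r).mono fun k hk => EReal.coe_lt_coe_iff.2 hk

lemma exists_contDiffBump_abs_mollify_sub_le {g : (Fin m → ℝ) → ℝ} (hg : Continuous g)
    (hK : IsCompact K) {δ ε : ℝ} (hδ : 0 < δ) (hε : 0 < ε) :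
    ∃ φ : ContDiffBump (0 : Fin m → ℝ), φ.rOut ≤ δ ∧ ∀ x ∈ K, |mollify φ g x - g x| ≤ ε := by
  have hunif := (hK.cthickening (r := δ)).uniformContinuousOn_of_continuous hg.continuousOn
  obtain ⟨η, hη, hgη⟩ := Metric.uniformContinuousOn_iff.1 hunif ε hε
  have hr : 0 < min η δ := lt_min hη hδ
  refine ⟨⟨min η δ / 2, min η δ, half_pos hr, half_lt_self hr⟩, min_le_right _ _, fun x hx => ?_⟩
  refine ContDiffBump.dist_normed_convolution_le hg.aestronglyMeasurable fun y hy => ?_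
  have hyx : dist y x < min η δ := hy
  exact (hgη y (Metric.mem_cthickening_of_dist_le y x δ K hx (hyx.le.trans (min_le_right _ _)))
    x (Metric.self_subset_cthickening K hx) (hyx.trans_le (min_le_left _ _))).le

lemma IsTypeF.exists_continuous_eq (hu : IsTypeF F U u) (hF : ∀ B ∈ F, B.PosSemidef)
    (hU : IsOpen U) (hN : IsClosed N) (hNU : N ⊆ {x | x ∈ U ∧ u x ≠ ⊥}) :
    ∃ g : (Fin m → ℝ) → ℝ, Continuous g ∧ ∀ y ∈ N, u y = g y := by
  have hcont := (hu.continuousOn_toReal hF hU).mono hNU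
  obtain ⟨g, hg⟩ := ContinuousMap.exists_restrict_eq hN
    (⟨N.domRestrict fun y => (u y).toReal, hcont.domRestrict⟩ : C(N, ℝ))
  refine ⟨g, g.continuous, fun y hy => ?_⟩
  have hgy : g y = (u y).toReal := DFunLike.congr_fun hg ⟨y, hy⟩
  rw [hgy, EReal.coe_toReal (hu.1 y (hNU hy).1) (hNU hy).2]

lemma lt_and_tendsto_of_abs_sub_le {s : ℕ → ℝ} {l : ℝ} (h : ∀ k, |s k - l| ≤ (1 / 2) ^ k / 8) :
    (∀ k, s (k + 1) + (1 / 2) ^ (k + 1) < s k + (1 / 2) ^ k) ∧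
      Tendsto (fun k => s k + (1 / 2) ^ k) atTop (nhds l) := by
  have hpow : Tendsto (fun k : ℕ => (1 / 2 : ℝ) ^ k) atTop (nhds 0) :=
    tendsto_pow_atTop_nhds_zero_of_lt_one (by norm_num) (by norm_num)
  refine ⟨fun k => ?_, ?_⟩
  · have hle := (abs_le.1 (h k)).1
    have hle' := (abs_le.1 (h (k + 1))).2
    have hpos : (0 : ℝ) < (1 / 2) ^ k := by positivity
    rw [pow_succ] at hle' ⊢
    linarith
  · have hs : Tendsto (fun k => s k - l) atTop (nhds 0) :=
      squeeze_zero_norm h (by simpa using hpow.div_const 8)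
    simpa [← add_assoc] using (hs.add hpow).const_add l

lemma IsConvexSubequation.exists_isSmoothApproximation_of_ne_bot (hF : IsConvexSubequation F)
    (hu : IsTypeF F U u) (hU : IsOpen U) (hK : IsCompact K) (hKU : K ⊆ {x | x ∈ U ∧ u x ≠ ⊥}) :
    ∃ v, IsSmoothApproximation F K u v := by
  have hpos : ∀ B ∈ F, B.PosSemidef := fun _ => hF.posSemidef
  obtain ⟨δ, hδ, hδU⟩ := hK.exists_cthickening_subset_open (hu.isOpen_ne_bot hpos hU) hKU
  obtain ⟨g, hg, hug⟩ := hu.exists_continuous_eq hpos hU Metric.isClosed_cthickening hδU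
  choose φ hφ hφg using fun k : ℕ =>
    exists_contDiffBump_abs_mollify_sub_le hg hK (half_pos hδ) (ε := (1 / 2) ^ k / 8)
      (by positivity)
  have hmem : ∀ k, ∀ x ∈ K, hessianMatrix (mollify (φ k) g) x ∈ F := fun k x hx =>
    hF.hessianMatrix_mollify_mem hu (half_pos hδ) (fun y hy => (hδU hy).1) hug hg (φ k)
      ((Metric.closedBall_subset_closedBall (by linarith [hφ k])).trans
        (Metric.closedBall_subset_cthickening hx δ))
  refine ⟨fun k y => mollify (φ k) g y + (1 / 2) ^ k,
    fun k => ((contDiff_mollify (φ k) hg).add contDiff_const).contDiffOn, fun k y hy => ?_,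
    fun k y hy => (lt_and_tendsto_of_abs_sub_le fun k => hφg k y hy).1 k, fun y hy => ?_⟩
  · rw [hessianMatrix_add_const (contDiff_mollify (φ k) hg).contDiffAt]
    exact hmem k y hy
  · rw [hug y (Metric.self_subset_cthickening K hy)]
    exact (continuous_coe_real_ereal.tendsto _).comp
      (lt_and_tendsto_of_abs_sub_le fun k => hφg k y hy).2

lemma IsConvexSubequation.exists_isSmoothApproximation (hF : IsConvexSubequation F)
    (hu : IsTypeF F U u) (hU : IsOpen U) (hV : IsOpen V) (hK : IsCompact K) (hVK : V ⊆ K)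
    (hKU : K ⊆ U) : ∃ v, IsSmoothApproximation F V u v := by
  classical
  set B := {x | x ∈ U ∧ u x = ⊥}
  set C := {x | x ∈ U ∧ u x ≠ ⊥}
  have hB : IsOpen B := hu.isOpen_eq_bot (fun _ => hF.posSemidef) hU
  have hC : IsOpen C := hu.isOpen_ne_bot (fun _ => hF.posSemidef) hU
  have hBC : Disjoint B C := Set.disjoint_left.2 fun x hx hx' => hx'.2 hx.2
  have hVBC : V = V ∩ B ∪ V ∩ C := by
    rw [← Set.inter_union_distrib_left, Set.left_eq_inter]
    exact fun x hx => (em (u x = ⊥)).imp (⟨hKU (hVK hx), ·⟩) (⟨hKU (hVK hx), ·⟩)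
  obtain ⟨v, hv⟩ := hF.exists_isSmoothApproximation_of_eq_bot (V := V ∩ B) fun y hy => hy.2.2
  obtain ⟨w, hw⟩ := hF.exists_isSmoothApproximation_of_ne_bot hu hU (hK.diff hB)
    fun x hx => ⟨hKU hx.1, fun h => hx.2 ⟨hKU hx.1, h⟩⟩
  have hw' := hw.mono (W := V ∩ C) fun x hx => ⟨hVK hx.1, hBC.notMem_of_mem_right hx.2⟩
  refine ⟨fun k => B.piecewise (v k) (w k), hVBC ▸ IsSmoothApproximation.union
    (hv.of_eqOn (hV.inter hB) fun k => (Set.piecewise_eqOn B _ _).mono Set.inter_subset_right)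
    (hw'.of_eqOn (hV.inter hC) fun k => (Set.piecewise_eqOn_compl B _ _).mono fun x hx =>
      hBC.notMem_of_mem_right hx.2) (hV.inter hB) (hV.inter hC)⟩

end SmoothApproximation

section Cylinder

variable {X : Type*} {n : ℕ} {A A' : Set X} {B B' : Set (Fin n → X)}

lemma cylinder_subset_cylinder (hA : A ⊆ A') (hB : B ⊆ B') :
    {y : Fin (n + 1) → X | y 0 ∈ A ∧ Fin.tail y ∈ B} ⊆ {y | y 0 ∈ A' ∧ Fin.tail y ∈ B'} :=
  fun _ hy => ⟨hA hy.1, hB hy.2⟩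

variable [TopologicalSpace X]

lemma isOpen_cylinder (hA : IsOpen A) (hB : IsOpen B) :
    IsOpen {y : Fin (n + 1) → X | y 0 ∈ A ∧ Fin.tail y ∈ B} :=
  (hA.preimage (continuous_apply 0)).inter (hB.preimage continuous_id.finTail)

lemma isCompact_cylinder (hA : IsCompact A) (hB : IsCompact B) :
    IsCompact {y : Fin (n + 1) → X | y 0 ∈ A ∧ Fin.tail y ∈ B} := by
  have himage : {y : Fin (n + 1) → X | y 0 ∈ A ∧ Fin.tail y ∈ B} =
      (fun p : X × (Fin n → X) => (Fin.cons p.1 p.2 : Fin (n + 1) → X)) '' (A ×ˢ B) := by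
    ext y
    refine ⟨fun hy => ⟨(y 0, Fin.tail y), hy, Fin.cons_self_tail y⟩, ?_⟩
    rintro ⟨p, hp, rfl⟩
    exact hp
  rw [himage]
  exact (hA.prod hB).image (Continuous.finCons (A := fun _ => X) continuous_fst continuous_snd)

end Cylinder

theorem smooth_approximation_general {m : ℕ} {F : Set (Matrix (Fin m) (Fin m) ℝ)}
    (hF : IsConvexSubequation F) {U V K : Set (Fin m → ℝ)} (hU : IsOpen U)
    {u : (Fin m → ℝ) → EReal} (hu : IsTypeF F U u) (hV : IsOpen V) (hK : IsCompact K)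
    (hVK : V ⊆ K) (hKU : K ⊆ U) :
    ∃ uk : ℕ → (Fin m → ℝ) → ℝ,
      (∀ k, ContDiffOn ℝ (⊤ : ℕ∞) (uk k) V) ∧
      (∀ k, IsTypeF F V fun y => ((uk k y : ℝ) : EReal)) ∧
      (∀ k, ∀ y ∈ V, uk (k + 1) y < uk k y) ∧
      (∀ y ∈ V, Tendsto (fun k => ((uk k y : ℝ) : EReal)) atTop (nhds (u y))) := by
  obtain ⟨v, hv⟩ := hF.exists_isSmoothApproximation hu hU hV hK hVK hKU
  exact ⟨v, hv.contDiffOn, fun k => hF.isTypeF_of_hessianMatrix_mem hV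
    (contDiffOn_infty.1 (hv.contDiffOn k) 2) (hv.hessianMatrix_mem k), hv.lt, hv.tendsto⟩

/-- **Smooth approximation.**  Let `c ∈ [nπ/2, (n+1)π/2)`, `D ⊂ ℝⁿ` a bounded domain,
`I ⊂ ℝ` an open interval, and `u ∈ ℱ_c(I × D)`.  Then for all precompact open subsets
`I' ⊂ I` and `D' ⊂ D` there is a sequence of smooth functions on `I' × D'`, each of type
`ℱ_c(I' × D')`, strictly decreasing and converging pointwise to `u` on `I' × D'`. -/
theorem smooth_approximation (n : ℕ) (c : ℝ)
    (hc : (n : ℝ) * π / 2 ≤ c) (hc' : c < ((n : ℝ) + 1) * π / 2)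
    (I : Set ℝ) (hIopen : IsOpen I) (hIconv : Convex ℝ I) (hIne : I.Nonempty)
    (D : Set (Fin n → ℝ)) (hDopen : IsOpen D) (hDconn : IsConnected D)
    (hDbdd : Bornology.IsBounded D)
    (u : (Fin (n+1) → ℝ) → EReal)
    (hu : IsTypeF (calF n c) {y | y 0 ∈ I ∧ Fin.tail y ∈ D} u)
    (I' : Set ℝ) (hI'open : IsOpen I') (hI'cpt : IsCompact (closure I'))
    (hI'sub : closure I' ⊆ I)
    (D' : Set (Fin n → ℝ)) (hD'open : IsOpen D') (hD'cpt : IsCompact (closure D'))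
    (hD'sub : closure D' ⊆ D) :
    ∃ uk : ℕ → (Fin (n+1) → ℝ) → ℝ,
      (∀ k, ContDiffOn ℝ (⊤ : ℕ∞) (uk k) {y | y 0 ∈ I' ∧ Fin.tail y ∈ D'}) ∧
      (∀ k, IsTypeF (calF n c) {y | y 0 ∈ I' ∧ Fin.tail y ∈ D'}
        (fun y => ((uk k y : ℝ) : EReal))) ∧
      (∀ k, ∀ y ∈ {y : Fin (n+1) → ℝ | y 0 ∈ I' ∧ Fin.tail y ∈ D'},
        uk (k+1) y < uk k y) ∧
      (∀ y ∈ {y : Fin (n+1) → ℝ | y 0 ∈ I' ∧ Fin.tail y ∈ D'},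
        Filter.Tendsto (fun k => ((uk k y : ℝ) : EReal)) Filter.atTop (nhds (u y))) :=
  smooth_approximation_general (isConvexSubequation_calF (by linarith) (by linarith))
    (isOpen_cylinder hIopen hDopen) hu (isOpen_cylinder hI'open hD'open)
    (isCompact_cylinder hI'cpt hD'cpt) (cylinder_subset_cylinder subset_closure subset_closure)
    (cylinder_subset_cylinder hI'sub hD'sub)
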